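/- arXiv:math/0110056 — 7 statements merged into one kernel-verified Lean document; each statement's English description precedes it below -/
import Mathlib

section
/- For all integers n ≥ 0 and k ≥ 0, the number of words in [k]^n avoiding the pattern 111 equals the sum over all integers i with 0 ≤ i ≤ k and n-i ≥ 0 and 2i-n ≥ 0 of C(k,i) · C(i, n-i) · n! / 2^{n-i}. In particular, f_{111}(n,k) = 0 whenever n > 2k. -/
/-- A word `σ ∈ [k]^n` (encoded as `σ : Fin n → Fin k`) contains the pattern `τ`
(encoded as a list of natural numbers) if there is a strictly increasing choice of
positions on which `σ` is order-isomorphic to `τ`. -/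
def WordContains {n k : ℕ} (σ : Fin n → Fin k) (τ : List ℕ) : Prop :=
  ∃ f : Fin τ.length → Fin n, StrictMono f ∧
    ∀ a b : Fin τ.length,
      (σ (f a) < σ (f b) ↔ τ.get a < τ.get b) ∧
      (σ (f a) = σ (f b) ↔ τ.get a = τ.get b)

/-- `avoiders n k T` is the number of words in `[k]^n` that avoid every pattern in `T`,
i.e. `f_T(n,k)`. -/
noncomputable def avoiders (n k : ℕ) (T : Set (List ℕ)) : ℕ :=
  Nat.card {σ : Fin n → Fin k // ∀ τ ∈ T, ¬ WordContains σ τ}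

/-!
A word avoids the pattern `111` exactly when each letter occurs at most twice. The words with
prescribed letter multiplicities `c b` are counted by the multinomial coefficient
`n! / ∏ b, (c b)!`, so the words all of whose multiplicities are at most two number `n!` times the
coefficient of `X ^ n` in `(1 + X + X ^ 2 / 2) ^ k`. Writing the base as `1 + X * (1 + X / 2)` and
applying the binomial theorem twice gives the sum: `i` is the number of distinct letters and `n - i`
the number of those used twice.
-/

section WordContent

open Finset
open scoped Nat PowerSeries

variable {α β R : Type*} [Fintype α]

/-- The content of a word `σ : α → β`: how many times each letter occurs in it. It is a `Finsupp`
so that it can serve as the exponent of a monomial. -/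
noncomputable def wordContent (σ : α → β) : β →₀ ℕ :=
  ∑ a, Finsupp.single (σ a) 1

theorem wordContent_apply [DecidableEq β] (σ : α → β) (b : β) :
    wordContent σ b = #{a | σ a = b} := by
  simp only [wordContent, Finsupp.finsetSum_apply, Finsupp.single_apply, card_filter]

theorem degree_wordContent (σ : α → β) : (wordContent σ).degree = Fintype.card α := by
  simp [wordContent]

theorem prod_X_eq_monomial_wordContent [CommSemiring R] (σ : α → β) :
    ∏ a, (MvPolynomial.X (σ a) : MvPolynomial β R) = MvPolynomial.monomial (wordContent σ) 1 :=
  (MvPolynomial.monomial_sum_one _ _).symm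

variable [Fintype β]

theorem sum_X_pow_card_eq_sum_monomial_wordContent [DecidableEq α] [CommSemiring R] :
    (∑ b, MvPolynomial.X b : MvPolynomial β R) ^ Fintype.card α =
      ∑ σ : α → β, MvPolynomial.monomial (wordContent σ) 1 := by
  simp only [← prod_X_eq_monomial_wordContent, ← Fintype.prod_sum, prod_const, card_univ]

theorem card_wordContent_eq [DecidableEq α] [DecidableEq β] {c : β →₀ ℕ}
    (hc : c.degree = Fintype.card α) :
    #{σ : α → β | wordContent σ = c} = c.multinomial := by
  have hcoeff := MvPolynomial.coeff_sum_X_pow_of_fintype (R := ℕ) c (Fintype.card α)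
  simpa [sum_X_pow_card_eq_sum_monomial_wordContent, MvPolynomial.coeff_sum, Finsupp.sum,
    ← Finsupp.degree_apply, hc] using hcoeff

/-- The exponential generating function `∑ m, w m * X ^ m / m!` of a sequence `w`. Products of
these series count words by the multiplicities of their letters. -/
noncomputable def expGenFun [Semifield R] (w : ℕ → R) : R⟦X⟧ :=
  PowerSeries.mk fun m ↦ w m / m !

theorem cast_multinomial_eq_factorial_div_prod [Semifield R] [CharZero R] (c : β →₀ ℕ) :
    (c.multinomial : R) = c.degree ! / ∏ b, ((c b)! : R) := by
  have hprod : ∏ b, ((c b)! : R) ≠ 0 := prod_ne_zero_iff.2 fun b _ ↦ by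
    exact_mod_cast (c b).factorial_ne_zero
  rw [eq_div_iff hprod, Finsupp.multinomial_eq_of_support_subset (subset_univ _),
    Finsupp.degree_eq_sum, mul_comm]
  exact_mod_cast Nat.multinomial_spec _ _

theorem sum_prod_wordContent_eq_coeff_prod_expGenFun [DecidableEq α] [Semifield R] [CharZero R]
    (w : β → ℕ → R) :
    ∑ σ : α → β, ∏ b, w b (wordContent σ b) =
      (Fintype.card α)! * PowerSeries.coeff (Fintype.card α) (∏ b, expGenFun (w b)) := by
  classical
  have hmaps : ∀ σ ∈ (univ : Finset (α → β)),
      wordContent σ ∈ finsuppAntidiag univ (Fintype.card α) := fun σ _ ↦ by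
    simp [← Finsupp.degree_eq_sum, degree_wordContent]
  rw [PowerSeries.coeff_prod, mul_sum, ← sum_fiberwise_of_maps_to' hmaps fun c ↦ ∏ b, w b (c b)]
  refine sum_congr rfl fun c hc ↦ ?_
  have hdeg : c.degree = Fintype.card α := by
    simpa [Finsupp.degree_eq_sum] using hc
  rw [sum_const, card_wordContent_eq hdeg, nsmul_eq_mul, cast_multinomial_eq_factorial_div_prod,
    hdeg]
  simp only [expGenFun, PowerSeries.coeff_mk, prod_div_distrib]
  rw [div_mul_eq_mul_div, mul_div_assoc]

theorem card_forall_wordContent_eq_coeff_prod_expGenFun [Semifield R] [CharZero R]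
    (p : β → ℕ → Prop) [∀ b, DecidablePred (p b)] :
    (Nat.card {σ : α → β // ∀ b, p b (wordContent σ b)} : R) =
      (Fintype.card α)! *
        PowerSeries.coeff (Fintype.card α) (∏ b, expGenFun fun m ↦ if p b m then 1 else 0) := by
  classical
  rw [← sum_prod_wordContent_eq_coeff_prod_expGenFun, Nat.card_eq_fintype_card,
    Fintype.card_subtype, natCast_card_filter]
  simp only [prod_ite_zero, prod_const_one, mem_univ, true_imp_iff]

end WordContent

section ConstantPattern

theorem wordContains_replicate_iff {n k : ℕ} (σ : Fin n → Fin k) {m : ℕ} (hm : m ≠ 0) (x : ℕ) :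
    WordContains σ (List.replicate m x) ↔ ∃ b, m ≤ wordContent σ b := by
  simp only [wordContent_apply]
  constructor
  · rintro ⟨f, hf, hfσ⟩
    let i₀ : Fin (List.replicate m x).length := ⟨0, by simpa [Nat.pos_iff_ne_zero]⟩
    refine ⟨σ (f i₀), ?_⟩
    have hσ (i) : σ (f i) = σ (f i₀) := (hfσ i i₀).2.2 (by simp)
    calc m = (Finset.univ.map ⟨f, hf.injective⟩).card := by simp
      _ ≤ _ := Finset.card_le_card fun a ha ↦ by
        obtain ⟨i, -, rfl⟩ := Finset.mem_map.1 ha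
        simpa using hσ i
  · rintro ⟨b, hb⟩
    have hlen : (List.replicate m x).length ≤ _ := List.length_replicate.trans_le hb
    let f := Finset.orderEmbOfCardLe _ hlen
    have hf (i) : σ (f i) = b := by simpa using Finset.orderEmbOfCardLe_mem _ hlen i
    exact ⟨f, f.strictMono, fun i j ↦ by simp [hf]⟩

theorem avoiders_replicate_eq_coeff_expGenFun_pow {R : Type*} [Semifield R] [CharZero R]
    (n k m x : ℕ) :
    (avoiders n k {List.replicate (m + 1) x} : R) =
      n.factorial *
        PowerSeries.coeff n (expGenFun (fun j ↦ if j ≤ m then (1 : R) else 0) ^ k) := by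
  have hcard : avoiders n k {List.replicate (m + 1) x} =
      Nat.card {σ : Fin n → Fin k // ∀ b, wordContent σ b ≤ m} := by
    simp [avoiders, wordContains_replicate_iff]
  rw [hcard, card_forall_wordContent_eq_coeff_prod_expGenFun fun _ j ↦ j ≤ m, Fintype.card_fin,
    Finset.prod_const, Finset.card_univ, Fintype.card_fin]

end ConstantPattern

section TruncatedExponential

open PowerSeries

variable {R : Type*}

theorem coeff_one_add_C_mul_X_pow [CommSemiring R] (a : R) (n k : ℕ) :
    coeff n ((1 + C a * X) ^ k) = k.choose n * a ^ n := by
  have hX : rescale a X = C a * X := by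
    ext m
    rw [coeff_rescale, coeff_C_mul, coeff_X]
    split_ifs with hm <;> simp [hm]
  have hrescale : (1 + C a * X) ^ k = rescale a (((1 + .X) ^ k : Polynomial R) : R⟦X⟧) := by
    simp [hX]
  rw [hrescale, coeff_rescale, Polynomial.coeff_coe, Polynomial.coeff_one_add_X_pow, mul_comm]

theorem coeff_one_add_X_mul_one_add_C_mul_X_pow [CommSemiring R] (a : R) (n k : ℕ) :
    coeff n ((1 + X * (1 + C a * X)) ^ k) =
      ∑ i ∈ Finset.range (k + 1),
        if i ≤ n ∧ n ≤ 2 * i then (k.choose i * i.choose (n - i) : R) * a ^ (n - i) else 0 := by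
  rw [add_comm 1, add_pow, map_sum]
  refine Finset.sum_congr rfl fun i _ ↦ ?_
  rw [one_pow, mul_one, mul_pow, mul_assoc, coeff_X_pow_mul', ← map_natCast (C (R := R)),
    coeff_mul_C, coeff_one_add_C_mul_X_pow, mul_comm, ← mul_assoc, ite_and]
  congr 1
  split_ifs
  · rfl
  · rw [Nat.choose_eq_zero_of_lt (by omega : i < n - i), Nat.cast_zero, mul_zero, zero_mul]

theorem expGenFun_ite_le_two [Semifield R] :
    expGenFun (fun j ↦ if j ≤ 2 then (1 : R) else 0) = 1 + X * (1 + C 2⁻¹ * X) := by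
  ext m
  rcases m with _ | _ | _ | m <;> simp [expGenFun, coeff_one, coeff_succ_X_mul]

end TruncatedExponential

/-- f_{111}(n,k) = ∑_{0 ≤ i ≤ k, n-i ≥ 0, 2i-n ≥ 0} C(k,i)·C(i,n-i)·n!/2^{n-i};
in particular f_{111}(n,k) = 0 when n > 2k. -/
theorem avoid_111_count (n k : ℕ) :
    ((avoiders n k {[1, 1, 1]} : ℚ) =
      ∑ i ∈ Finset.range (k + 1),
        if i ≤ n ∧ n ≤ 2 * i then
          (k.choose i * i.choose (n - i) * n.factorial : ℚ) / 2 ^ (n - i)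
        else 0) ∧
    (2 * k < n → avoiders n k {[1, 1, 1]} = 0) := by
  have hcount : (avoiders n k {[1, 1, 1]} : ℚ) =
      ∑ i ∈ Finset.range (k + 1),
        if i ≤ n ∧ n ≤ 2 * i then
          (k.choose i * i.choose (n - i) * n.factorial : ℚ) / 2 ^ (n - i)
        else 0 := by
    rw [show [1, 1, 1] = List.replicate (2 + 1) 1 from rfl,
      avoiders_replicate_eq_coeff_expGenFun_pow, expGenFun_ite_le_two,
      coeff_one_add_X_mul_one_add_C_mul_X_pow, Finset.mul_sum]
    refine Finset.sum_congr rfl fun i _ ↦ ?_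
    rw [inv_pow]
    split_ifs <;> ring
  refine ⟨hcount, fun h ↦ ?_⟩
  have hzero : (avoiders n k {[1, 1, 1]} : ℚ) = 0 := by
    refine hcount.trans (Finset.sum_eq_zero fun i hi ↦ if_neg ?_)
    have := Finset.mem_range.1 hi
    omega
  exact_mod_cast hzero
end

section
/- The patterns 121 and 112 are Wilf-equivalent: for all integers n ≥ 0 and k ≥ 0, the number of words in [k]^n avoiding the pattern 121 equals the number of words in [k]^n avoiding the pattern 112. -/
/-!
Let `a` be smaller than every letter of `S`. A word over `insert a S` avoids the pattern iff it does
so after deleting the copies of `a` and every copy of `a` after the first is in a forced place: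
directly behind the first one for 121, at the end of the word for 112. In both cases a word of given
length is thus determined by its part over `S`, of length `m` say, and, if `a` occurs, by the
position of the first `a` among `m + 1` choices. Hence the numbers `f(n, k)` of avoiders satisfy
`f(n, k + 1) = f(n, k) + ∑ m < n, (m + 1) f(m, k)` for both patterns.
-/

section PatternAvoidance

open List

section Lists

variable {α : Type*}

theorem cons_sublist_append_iff_of_notMem {a : α} {t u w : List α} (ha : a ∉ u) :
    a :: t <+ u ++ w ↔ a :: t <+ w := by
  refine ⟨fun h => ?_, fun h => h.trans (sublist_append_right u w)⟩
  obtain ⟨l₁, l₂, heq, h₁, h₂⟩ := sublist_append_iff.1 h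
  cases l₁ with
  | nil => simpa [heq] using h₂
  | cons b l₁ =>
    obtain ⟨rfl, -⟩ := cons.inj heq
    exact absurd (h₁.subset mem_cons_self) ha

theorem forall_not_pair_sublist_iff_exists_replicate_append {a : α} {w : List α} :
    (∀ d ≠ a, ¬ [d, a] <+ w) ↔ ∃ j v, a ∉ v ∧ w = replicate j a ++ v := by
  constructor
  · intro h
    induction w with
    | nil => exact ⟨0, [], by simp⟩
    | cons b w ih =>
      rcases eq_or_ne b a with rfl | hb
      · obtain ⟨j, v, hv, rfl⟩ := ih fun d hd hdw => h d hd (hdw.cons b)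
        exact ⟨j + 1, v, hv, rfl⟩
      · have haw : a ∉ w := fun haw => h b hb ((singleton_sublist.2 haw).cons_cons b)
        exact ⟨0, b :: w, by simp [hb.symm, haw], rfl⟩
  · rintro ⟨j, v, hv, rfl⟩ d hd hdw
    have hdv : [d, a] <+ v :=
      (cons_sublist_append_iff_of_notMem fun h => hd (eq_of_mem_replicate h)).1 hdw
    exact hv (hdv.subset (by simp))

theorem forall_not_pair_sublist_iff_exists_append_replicate {a : α} {w : List α} :
    (∀ d ≠ a, ¬ [a, d] <+ w) ↔ ∃ j v, a ∉ v ∧ w = v ++ replicate j a := by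
  have hreverse (d : α) : [a, d] <+ w ↔ [d, a] <+ w.reverse := reverse_sublist.symm
  simp only [hreverse, forall_not_pair_sublist_iff_exists_replicate_append]
  constructor
  · rintro ⟨j, v, hv, hw⟩
    exact ⟨j, v.reverse, by simpa using hv, by simpa using congrArg reverse hw⟩
  · rintro ⟨j, v, hv, rfl⟩
    exact ⟨j, v.reverse, by simpa using hv, by simp⟩

theorem filter_ne_eq_self [DecidableEq α] {a : α} {L : List α} (ha : a ∉ L) :
    L.filter (· ≠ a) = L :=
  filter_eq_self.2 fun _ hx => decide_eq_true (ne_of_mem_of_not_mem hx ha)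

theorem ofFn_sublist_ofFn_iff {m n : ℕ} {ρ : Fin m → α} {σ : Fin n → α} :
    ofFn ρ <+ ofFn σ ↔ ∃ f : Fin m → Fin n, StrictMono f ∧ ρ = σ ∘ f := by
  let eρ := Fin.castOrderIso (length_ofFn (f := ρ))
  let eσ := Fin.castOrderIso (length_ofFn (f := σ))
  rw [sublist_iff_exists_fin_orderEmbedding_get_eq]
  constructor
  · rintro ⟨f, hf⟩
    refine ⟨eσ ∘ f ∘ eρ.symm, eσ.strictMono.comp (f.strictMono.comp eρ.symm.strictMono), ?_⟩
    funext i
    exact (get_ofFn ρ _).symm.trans ((hf (eρ.symm i)).trans (get_ofFn σ _))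
  · rintro ⟨f, hf, rfl⟩
    refine ⟨OrderEmbedding.ofStrictMono (eσ.symm ∘ f ∘ eρ)
      (eσ.symm.strictMono.comp (hf.comp eρ.strictMono)), fun i => ?_⟩
    rw [get_ofFn, get_ofFn]
    rfl

theorem finite_words_over (S : Finset α) (n : ℕ) :
    {w : List α | w.length = n ∧ ∀ x ∈ w, x ∈ S}.Finite := by
  refine ((finite_length_eq S n).image (map Subtype.val)).subset ?_
  rintro w ⟨hlen, hS⟩
  lift w to List S using hS
  exact ⟨w, by simpa using hlen, rfl⟩

end Lists

section Avoidance

variable {α : Type*} [LT α]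

/-- Avoidance of a pattern with letters `1 < 2`. The pattern is encoded by the function `g` sending
`c` and `d` to its instance with `c` in place of `1` and `d` in place of `2`. -/
def Avoids (g : α → α → List α) (w : List α) : Prop :=
  ∀ c d, c < d → ¬ g c d <+ w

/-- The words of length `n` with letters in `S` that avoid the pattern encoded by `g`. -/
def avoidingWords (g : α → α → List α) (S : Finset α) (n : ℕ) : Set (List α) :=
  {w | w.length = n ∧ (∀ x ∈ w, x ∈ S) ∧ Avoids g w}

theorem avoidingWords_empty {g : α → α → List α} (hg : ∀ c d, c ∈ g c d) (n : ℕ) :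
    avoidingWords g ∅ n = {w | w.length = n ∧ w = []} := by
  ext w
  simp only [avoidingWords, Finset.notMem_empty, ← eq_nil_iff_forall_not_mem, Set.mem_ofPred_eq]
  refine and_congr_right fun _ => and_iff_left_of_imp ?_
  rintro rfl c d - h
  exact not_mem_nil (h.subset (hg c d))

theorem finite_avoidingWords (g : α → α → List α) (S : Finset α) (n : ℕ) :
    (avoidingWords g S n).Finite :=
  (finite_words_over S n).subset fun _ hw => ⟨hw.1, hw.2.1⟩

variable {g : α → α → List α} {a : α} {S : Finset α} {L w : List α} {n : ℕ}

theorem Avoids.of_sublist {w' : List α} (hw : Avoids g w) (h : w' <+ w) : Avoids g w' :=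
  fun c d hcd hg => hw c d hcd (hg.trans h)

theorem notMem_of_mem_avoidingWords (haS : a ∉ S) (hL : L ∈ avoidingWords g S n) : a ∉ L :=
  fun ha => haS (hL.2.1 a ha)

theorem avoidingWords_insert_sep_notMem [DecidableEq α] (haS : a ∉ S) :
    {w ∈ avoidingWords g (insert a S) n | a ∉ w} = avoidingWords g S n := by
  ext w
  constructor
  · rintro ⟨⟨hlen, hS, hw⟩, ha⟩
    exact ⟨hlen, fun x hx => Finset.mem_of_mem_insert_of_ne (hS x hx)
      (ne_of_mem_of_not_mem hx ha), hw⟩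
  · intro hw
    exact ⟨⟨hw.1, fun x hx => Finset.mem_insert_of_mem (hw.2.1 x hx), hw.2.2⟩,
      notMem_of_mem_avoidingWords haS hw⟩

end Avoidance

section Insertion

variable {α : Type*} [DecidableEq α]

/-- The property of a pattern that behind the first occurrence of a letter `a` all its other copies
have a forced place: `place a j v` is the word `v` with `j` copies of `a` put there. -/
structure ForcesPlace (g : α → α → List α) (place : α → ℕ → List α → List α) : Prop where
  mem_iff : ∀ c d x, x ∈ g c d ↔ x = c ∨ x = d
  perm : ∀ a j v, place a j v ~ replicate j a ++ v
  filter_ne : ∀ a j v, a ∉ v → (place a j v).filter (· ≠ a) = v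
  avoids_iff : ∀ a u w, a ∉ u →
    ((∀ d ≠ a, ¬ g a d <+ u ++ a :: w) ↔ ∃ j v, a ∉ v ∧ w = place a j v)

theorem forcesPlace_121 :
    ForcesPlace (fun c d : α => [c, d, c]) (fun a j v => replicate j a ++ v) where
  mem_iff c d x := by simp only [mem_cons, not_mem_nil, or_false]; tauto
  perm a j v := .refl _
  filter_ne a j v ha := by rw [filter_append, filter_ne_eq_self ha]; simp
  avoids_iff a u w ha := by
    simp only [cons_sublist_append_iff_of_notMem ha, cons_sublist_cons,
      forall_not_pair_sublist_iff_exists_replicate_append]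

theorem forcesPlace_112 :
    ForcesPlace (fun c d : α => [c, c, d]) (fun a j v => v ++ replicate j a) where
  mem_iff c d x := by simp
  perm a j v := perm_append_comm
  filter_ne a j v ha := by rw [filter_append, filter_ne_eq_self ha]; simp
  avoids_iff a u w ha := by
    simp only [cons_sublist_append_iff_of_notMem ha, cons_sublist_cons,
      forall_not_pair_sublist_iff_exists_append_replicate]

/-- The word obtained from `L` by inserting a first copy of `a` at position `i` and `j` further
copies behind it as prescribed by `place`. -/
def insertLetter (place : α → ℕ → List α → List α) (a : α) (L : List α) (i j : ℕ) : List α :=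
  L.take i ++ a :: place a j (L.drop i)

variable {g : α → α → List α} {place : α → ℕ → List α → List α} {a : α} {L : List α}

theorem idxOf_insertLetter (ha : a ∉ L) {i : ℕ} (hi : i ≤ L.length) (j : ℕ) :
    (insertLetter place a L i j).idxOf a = i := by
  rw [insertLetter, idxOf_append_of_notMem fun hm => ha (mem_of_mem_take hm), idxOf_cons_self,
    length_take_of_le hi, add_zero]

theorem ForcesPlace.insertLetter_perm (h : ForcesPlace g place) (a : α) (L : List α) (i j : ℕ) :
    insertLetter place a L i j ~ replicate (j + 1) a ++ L :=
  calc insertLetter place a L i j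
    _ ~ a :: (L.take i ++ place a j (L.drop i)) := perm_middle
    _ ~ a :: (L.take i ++ (replicate j a ++ L.drop i)) := ((h.perm a j _).append_left _).cons a
    _ ~ a :: (replicate j a ++ (L.take i ++ L.drop i)) := (perm_append_comm_assoc _ _ _).cons a
    _ = replicate (j + 1) a ++ L := by rw [take_append_drop, replicate_succ, cons_append]

theorem ForcesPlace.filter_insertLetter (h : ForcesPlace g place) (ha : a ∉ L) (i j : ℕ) :
    (insertLetter place a L i j).filter (· ≠ a) = L := by
  have htake : a ∉ L.take i := fun hm => ha (mem_of_mem_take hm)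
  have hdrop : a ∉ L.drop i := fun hm => ha (mem_of_mem_drop hm)
  rw [insertLetter, filter_append, filter_cons_of_neg (by simp), filter_ne_eq_self htake,
    h.filter_ne a j _ hdrop, take_append_drop]

end Insertion

section Recurrence

variable {α : Type*} [LinearOrder α] {g : α → α → List α} {place : α → ℕ → List α → List α}
  {a : α} {S : Finset α} {L w : List α} {n : ℕ}

namespace ForcesPlace

variable (h : ForcesPlace g place)
include h

theorem avoids_iff_of_forall_le (ha : ∀ x ∈ w, a ≤ x) :
    Avoids g w ↔ Avoids g (w.filter (· ≠ a)) ∧ ∀ d ≠ a, ¬ g a d <+ w := by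
  constructor
  · refine fun hw => ⟨hw.of_sublist filter_sublist, fun d hd hg => ?_⟩
    have had : a ≤ d := ha d (hg.subset ((h.mem_iff a d d).2 (.inr rfl)))
    exact hw a d (had.lt_of_ne' hd) hg
  · rintro ⟨hfilter, hmin⟩ c d hcd hg
    have hac : a ≤ c := ha c (hg.subset ((h.mem_iff c d c).2 (.inl rfl)))
    rcases hac.eq_or_lt with rfl | hac
    · exact hmin d hcd.ne' hg
    · have hag : a ∉ g c d := by
        rw [h.mem_iff, not_or]
        exact ⟨hac.ne, (hac.trans hcd).ne⟩
      exact hfilter c d hcd (filter_ne_eq_self hag ▸ hg.filter (· ≠ a))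

theorem insertLetter_mem_avoidingWords (haS : ∀ x ∈ S, a < x) {m : ℕ} (hmn : m < n)
    (hL : L ∈ avoidingWords g S m) (i : ℕ) :
    insertLetter place a L i (n - 1 - m) ∈ avoidingWords g (insert a S) n := by
  have ha : a ∉ L := notMem_of_mem_avoidingWords (fun ha => (haS a ha).false) hL
  have hperm := h.insertLetter_perm a L i (n - 1 - m)
  have hletters : ∀ x ∈ insertLetter place a L i (n - 1 - m), x = a ∨ x ∈ L := by
    intro x hx
    simpa using hperm.subset hx
  refine ⟨?_, fun x hx => ?_, ?_⟩
  · rw [hperm.length_eq, length_append, length_replicate, hL.1]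
    omega
  · exact Finset.mem_insert.2 ((hletters x hx).imp_right (hL.2.1 x))
  · rw [h.avoids_iff_of_forall_le fun x hx =>
      (hletters x hx).elim Eq.ge fun hxL => (haS x (hL.2.1 x hxL)).le, h.filter_insertLetter ha]
    refine ⟨hL.2.2, (h.avoids_iff a _ _ fun hm => ha (mem_of_mem_take hm)).2 ?_⟩
    exact ⟨n - 1 - m, L.drop i, fun hm => ha (mem_of_mem_drop hm), rfl⟩

theorem exists_eq_insertLetter (ha : ∀ x ∈ w, a ≤ x) (haw : a ∈ w) (hw : Avoids g w) :
    ∃ L i j, a ∉ L ∧ i ≤ L.length ∧ w = insertLetter place a L i j := by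
  obtain ⟨u, t, rfl, hu⟩ := eq_append_cons_of_mem haw
  obtain ⟨j, v, hv, rfl⟩ := (h.avoids_iff a u t hu).1 ((h.avoids_iff_of_forall_le ha).1 hw).2
  exact ⟨u ++ v, u.length, j, by simp [hu, hv], by simp, by simp [insertLetter]⟩

theorem exists_insertLetter_eq_of_mem_avoidingWords (haS : ∀ x ∈ S, a < x)
    (hw : w ∈ avoidingWords g (insert a S) n) (haw : a ∈ w) :
    ∃ m < n, ∃ L ∈ avoidingWords g S m, ∃ i ≤ m, insertLetter place a L i (n - 1 - m) = w := by
  obtain ⟨hlen, hS, hav⟩ := hw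
  have hle : ∀ x ∈ w, a ≤ x := fun x hx =>
    (Finset.mem_insert.1 (hS x hx)).elim Eq.ge fun hxS => (haS x hxS).le
  obtain ⟨L, i, j, haL, hi, rfl⟩ := h.exists_eq_insertLetter hle haw hav
  have hn : j + 1 + L.length = n := by
    rw [← hlen, (h.insertLetter_perm a L i j).length_eq, length_append, length_replicate]
  have hsub : L <+ insertLetter place a L i j :=
    calc L
      _ = (insertLetter place a L i j).filter (· ≠ a) := (h.filter_insertLetter haL i j).symm
      _ <+ insertLetter place a L i j := filter_sublist
  have hL : L ∈ avoidingWords g S L.length := ⟨rfl, fun x hx =>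
    Finset.mem_of_mem_insert_of_ne (hS x (hsub.subset hx)) (ne_of_mem_of_not_mem hx haL),
    hav.of_sublist hsub⟩
  refine ⟨L.length, by omega, L, hL, i, hi, ?_⟩
  rw [show n - 1 - L.length = j by omega]

theorem ncard_avoidingWords_insert_sep_mem (haS : ∀ x ∈ S, a < x) :
    {w ∈ avoidingWords g (insert a S) n | a ∈ w}.ncard =
      ∑ m ∈ Finset.range n, (m + 1) * (avoidingWords g S m).ncard := by
  let F : (Σ m : Fin n, Fin (m + 1) × avoidingWords g S m) →
      {w ∈ avoidingWords g (insert a S) n | a ∈ w} := fun ⟨m, i, L⟩ =>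
    ⟨insertLetter place a L i (n - 1 - m), h.insertLetter_mem_avoidingWords haS m.2 L.2 i,
      by simp [insertLetter]⟩
  have hinj : F.Injective := by
    rintro ⟨⟨m, hm⟩, i, L, hL⟩ ⟨⟨m', hm'⟩, i', L', hL'⟩ heq
    replace heq := congrArg Subtype.val heq
    have haL : a ∉ L := notMem_of_mem_avoidingWords (fun ha => (haS a ha).false) hL
    have haL' : a ∉ L' := notMem_of_mem_avoidingWords (fun ha => (haS a ha).false) hL'
    obtain rfl : L.length = m := hL.1
    obtain rfl : L'.length = m' := hL'.1
    obtain rfl : L = L' := by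
      simpa only [F, h.filter_insertLetter haL, h.filter_insertLetter haL'] using
        congrArg (filter (· ≠ a)) heq
    obtain rfl : i = i' := Fin.ext <| by
      simpa only [F, idxOf_insertLetter haL i.is_le, idxOf_insertLetter haL i'.is_le] using
        congrArg (idxOf a) heq
    rfl
  have hsurj : F.Surjective := by
    rintro ⟨w, hw, haw⟩
    obtain ⟨m, hm, L, hL, i, hi, rfl⟩ := h.exists_insertLetter_eq_of_mem_avoidingWords haS hw haw
    exact ⟨⟨⟨m, hm⟩, ⟨i, Nat.lt_succ_of_le hi⟩, ⟨L, hL⟩⟩, rfl⟩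
  have (m : ℕ) : Finite (avoidingWords g S m) := (finite_avoidingWords g S m).to_subtype
  rw [← Nat.card_coe_set_eq, ← Nat.card_eq_of_bijective F ⟨hinj, hsurj⟩, Nat.card_sigma,
    Finset.sum_range]
  simp only [Nat.card_prod, Nat.card_fin, Nat.card_coe_set_eq]

theorem ncard_avoidingWords_insert (haS : ∀ x ∈ S, a < x) (n : ℕ) :
    (avoidingWords g (insert a S) n).ncard = (avoidingWords g S n).ncard +
      ∑ m ∈ Finset.range n, (m + 1) * (avoidingWords g S m).ncard := by
  rw [← h.ncard_avoidingWords_insert_sep_mem haS,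
    ← avoidingWords_insert_sep_notMem fun ha => (haS a ha).false, add_comm]
  exact (Set.ncard_inter_add_ncard_sdiff_eq_ncard _ {w | a ∈ w} (finite_avoidingWords _ _ _)).symm

theorem ncard_avoidingWords_eq {g' : α → α → List α} {place' : α → ℕ → List α → List α}
    (h' : ForcesPlace g' place') (S : Finset α) (n : ℕ) :
    (avoidingWords g S n).ncard = (avoidingWords g' S n).ncard := by
  induction S using Finset.induction_on_min generalizing n with
  | empty =>
    rw [avoidingWords_empty fun c d => (h.mem_iff c d c).2 (.inl rfl),
      avoidingWords_empty fun c d => (h'.mem_iff c d c).2 (.inl rfl)]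
  | insert a S haS ih =>
    simp only [h.ncard_avoidingWords_insert haS, h'.ncard_avoidingWords_insert haS, ih]

end ForcesPlace

end Recurrence

section Words

variable {n k : ℕ}

theorem wordContains_iff_exists_ofFn_sublist {σ : Fin n → Fin k} {τ : List ℕ} :
    WordContains σ τ ↔ ∃ ρ : Fin τ.length → Fin k, ofFn ρ <+ ofFn σ ∧
      ∀ a b, (ρ a < ρ b ↔ τ.get a < τ.get b) ∧ (ρ a = ρ b ↔ τ.get a = τ.get b) := by
  simp only [WordContains, ofFn_sublist_ofFn_iff]
  constructor
  · rintro ⟨f, hf, h⟩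
    exact ⟨σ ∘ f, ⟨f, hf, rfl⟩, h⟩
  · rintro ⟨_, ⟨f, hf, rfl⟩, h⟩
    exact ⟨f, hf, h⟩

theorem wordContains_121_iff {σ : Fin n → Fin k} :
    WordContains σ [1, 2, 1] ↔ ∃ c d, c < d ∧ [c, d, c] <+ ofFn σ := by
  rw [wordContains_iff_exists_ofFn_sublist]
  constructor
  · rintro ⟨ρ, hρ, h⟩
    have h01 : ρ 0 < ρ 1 := (h 0 1).1.2 (by simp)
    have h02 : ρ 2 = ρ 0 := (h 2 0).2.2 (by simp)
    exact ⟨ρ 0, ρ 1, h01, by simpa [ofFn_succ, h02] using hρ⟩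
  · rintro ⟨c, d, hcd, hσ⟩
    refine ⟨![c, d, c], by simpa [ofFn_succ] using hσ, ?_⟩
    simp [Fin.forall_fin_succ, hcd, hcd.le, hcd.ne, hcd.ne']

theorem wordContains_112_iff {σ : Fin n → Fin k} :
    WordContains σ [1, 1, 2] ↔ ∃ c d, c < d ∧ [c, c, d] <+ ofFn σ := by
  rw [wordContains_iff_exists_ofFn_sublist]
  constructor
  · rintro ⟨ρ, hρ, h⟩
    have h02 : ρ 0 < ρ 2 := (h 0 2).1.2 (by simp)
    have h01 : ρ 1 = ρ 0 := (h 1 0).2.2 (by simp)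
    exact ⟨ρ 0, ρ 2, h02, by simpa [ofFn_succ, h01] using hρ⟩
  · rintro ⟨c, d, hcd, hσ⟩
    refine ⟨![c, c, d], by simpa [ofFn_succ] using hσ, ?_⟩
    simp [Fin.forall_fin_succ, hcd, hcd.le, hcd.ne, hcd.ne']

theorem avoiders_singleton_eq_ncard {τ : List ℕ} {g : Fin k → Fin k → List (Fin k)}
    (h : ∀ σ : Fin n → Fin k, WordContains σ τ ↔ ∃ c d, c < d ∧ g c d <+ ofFn σ) :
    avoiders n k {τ} = (avoidingWords g Finset.univ n).ncard := by
  have himage : avoidingWords g Finset.univ n =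
      ofFn '' {σ : Fin n → Fin k | ∀ t ∈ ({τ} : Set (List ℕ)), ¬ WordContains σ t} := by
    ext w
    constructor
    · rintro ⟨rfl, -, hw⟩
      exact ⟨w.get, by simpa [h, Avoids] using hw, ofFn_get w⟩
    · rintro ⟨σ, hσ, rfl⟩
      exact ⟨length_ofFn, by simp, by simpa [h, Avoids] using hσ⟩
  rw [himage, Set.ncard_image_of_injective _ ofFn_injective]
  rfl

end Words

end PatternAvoidance

/-- The patterns 121 and 112 are Wilf-equivalent. -/
theorem avoid_121_eq_avoid_112 (n k : ℕ) :
    avoiders n k {[1, 2, 1]} = avoiders n k {[1, 1, 2]} := by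
  rw [avoiders_singleton_eq_ncard fun _ => wordContains_121_iff,
    avoiders_singleton_eq_ncard fun _ => wordContains_112_iff]
  exact forcesPlace_121.ncard_avoidingWords_eq forcesPlace_112 Finset.univ n
end

section
/- For all integers n ≥ 1 and k ≥ 1, the numbers f_{112}(n,k) of words in [k]^n avoiding the pattern 112 satisfy the recurrence f_{112}(n,k) - f_{112}(n,k-1) = f_{112}(n-1,k) + (n-1) · f_{112}(n-1,k-1). -/
/-!
Sort the words of length `n` over a `k`-letter alphabet avoiding `112` by the occurrences of the
smallest letter. If it is the last letter, that letter lies in no copy of `112` and can be deleted,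
which gives `f(n - 1, k)` words. If it does not occur, one letter of the alphabet is superfluous,
which gives `f(n, k - 1)` words. Otherwise the last letter is larger, so two occurrences of the
smallest letter would create a `112`: it occurs exactly once, at one of the `n - 1` positions before
the last, and deleting it leaves an arbitrary avoiding word of length `n - 1` over the remaining
`k - 1` letters.
-/

/-- Avoidance of the pattern `112`, spelled out on positions: two equal letters are never followed
by a larger one. Positions and letters range over arbitrary orders. -/
def Avoids112 {ι α : Type*} [LT ι] [LT α] (σ : ι → α) : Prop :=
  ∀ ⦃i j l⦄, i < j → j < l → σ i = σ j → ¬ σ j < σ l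

theorem not_wordContains_112_iff {n k : ℕ} {σ : Fin n → Fin k} :
    ¬ WordContains σ [1, 1, 2] ↔ Avoids112 σ := by
  constructor
  · intro h i j l hij hjl heq hlt
    refine h ⟨![i, j, l], ?_, ?_⟩
    · change StrictMono ![i, j, l]
      simp [hij, hjl]
    · change ∀ a b : Fin 3, _
      simp [Fin.forall_fin_succ, heq, hlt, hlt.le, hlt.ne, hlt.ne']
  · rintro h ⟨f, hf, hiso⟩
    let pos : Fin 3 → Fin n := f
    have hpos : StrictMono pos := hf
    exact h (hpos (by decide : (0 : Fin 3) < 1)) (hpos (by decide : (1 : Fin 3) < 2))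
      ((hiso (0 : Fin 3) (1 : Fin 3)).2.2 rfl) ((hiso (1 : Fin 3) (2 : Fin 3)).1.2 (by decide))

section Order

variable {ι κ α β : Type*} [Preorder α] [Preorder β]

theorem Avoids112.comp_strictMono [Preorder ι] [Preorder κ] {σ : ι → α} {f : κ → ι}
    (hσ : Avoids112 σ) (hf : StrictMono f) : Avoids112 (σ ∘ f) :=
  fun _ _ _ hij hjl heq => hσ (hf hij) (hf hjl) heq

theorem avoids112_orderEmbedding_comp_iff [Preorder ι] {σ : ι → α} (e : α ↪o β) :
    Avoids112 (e ∘ σ) ↔ Avoids112 σ := by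
  simp only [Avoids112, Function.comp_apply, e.lt_iff_lt, e.injective.eq_iff]

theorem Avoids112.eq_of_lt [LinearOrder ι] {σ : ι → α} (hσ : Avoids112 σ) {p q r : ι} (hp : p < r)
    (hq : q < r) (heq : σ p = σ q) (hlt : σ p < σ r) : p = q := by
  rcases lt_trichotomy p q with hpq | rfl | hqp
  · exact absurd (heq ▸ hlt) (hσ hpq hq heq)
  · rfl
  · exact absurd hlt (hσ hqp hp heq.symm)

end Order

section Insert

variable {n : ℕ} {α : Type*} [Preorder α] {a : α}

theorem avoids112_snoc_iff {τ : Fin n → α} (ha : IsMin a) :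
    Avoids112 (Fin.snoc τ a : Fin (n + 1) → α) ↔ Avoids112 τ := by
  constructor
  · intro h
    simpa [Function.comp_def] using h.comp_strictMono Fin.strictMono_castSucc
  · intro h i j l hij hjl heq hlt
    cases l using Fin.lastCases with
    | last => exact ha.not_lt (by simpa using hlt)
    | cast l =>
      obtain ⟨j, rfl⟩ := Fin.exists_castSucc_eq.2 (Fin.ne_last_of_lt hjl)
      obtain ⟨i, rfl⟩ := Fin.exists_castSucc_eq.2 (Fin.ne_last_of_lt hij)
      simp only [Fin.snoc_castSucc] at heq hlt
      exact h (Fin.castSucc_lt_castSucc_iff.1 hij) (Fin.castSucc_lt_castSucc_iff.1 hjl) heq hlt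

theorem avoids112_insertNth_iff {τ : Fin n → α} (p : Fin (n + 1)) (ha : IsMin a)
    (hτ : ∀ i, τ i ≠ a) :
    Avoids112 (p.insertNth a τ : Fin (n + 1) → α) ↔ Avoids112 τ := by
  -- `a` occurs once and is minimal, so it can play neither a `1` nor the `2` of the pattern.
  have hτ' : ∀ i, a ≠ τ i := fun i => (hτ i).symm
  simp [Avoids112, Fin.forall_iff_succAbove p, hτ, hτ', ha.not_lt,
    (Fin.strictMono_succAbove p).lt_iff_lt]

end Insert

/-- The set of words in `[k]^n` avoiding `112`. The letters are `0, …, k - 1`. -/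
def words112 (n k : ℕ) : Set (Fin n → Fin k) :=
  {σ | Avoids112 σ}

theorem avoiders_112_eq_ncard (n k : ℕ) : avoiders n k {[1, 1, 2]} = (words112 n k).ncard := by
  refine Nat.card_congr (Equiv.subtypeEquivRight fun σ => ?_)
  simp only [Set.mem_singleton_iff, forall_eq]
  exact not_wordContains_112_iff

section Decomposition

variable {n k : ℕ}

theorem avoids112_snoc_zero_iff {τ : Fin n → Fin (k + 1)} :
    Avoids112 (Fin.snoc τ 0 : Fin (n + 1) → Fin (k + 1)) ↔ Avoids112 τ :=
  avoids112_snoc_iff isMin_bot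

theorem avoids112_succ_comp_iff {τ : Fin n → Fin k} :
    Avoids112 (Fin.succ ∘ τ) ↔ Avoids112 τ :=
  avoids112_orderEmbedding_comp_iff (Fin.succOrderEmb k)

theorem avoids112_insertNth_zero_succ_comp_iff (p : Fin (n + 1)) {τ : Fin n → Fin k} :
    Avoids112 (p.insertNth 0 (Fin.succ ∘ τ) : Fin (n + 1) → Fin (k + 1)) ↔ Avoids112 τ :=
  (avoids112_insertNth_iff p isMin_bot fun _ => Fin.succ_ne_zero _).trans
    avoids112_succ_comp_iff

theorem exists_succ_comp_eq_iff {ι : Type*} {σ : ι → Fin (k + 1)} :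
    (∃ τ : ι → Fin k, Fin.succ ∘ τ = σ) ↔ ∀ i, σ i ≠ 0 := by
  simp only [← Fin.exists_succ_eq, Classical.skolem, funext_iff, Function.comp_apply]

theorem words112_last_eq_zero :
    {σ ∈ words112 (n + 1) (k + 1) | σ (Fin.last n) = 0} =
      (fun τ => Fin.snoc τ 0) '' words112 n (k + 1) := by
  ext σ
  constructor
  · rintro ⟨hσ, hlast⟩
    have hsnoc : (Fin.snoc (Fin.init σ) 0 : Fin (n + 1) → Fin (k + 1)) = σ := by
      rw [← hlast, Fin.snoc_init_self]
    refine ⟨Fin.init σ, avoids112_snoc_zero_iff.1 ?_, hsnoc⟩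
    rw [hsnoc]
    exact hσ
  · rintro ⟨τ, hτ, rfl⟩
    exact ⟨avoids112_snoc_zero_iff.2 hτ, Fin.snoc_last _ _⟩

theorem words112_forall_ne_zero :
    {σ ∈ words112 n (k + 1) | ∀ i, σ i ≠ 0} = (Fin.succ ∘ ·) '' words112 n k := by
  ext σ
  constructor
  · rintro ⟨hσ, hne⟩
    obtain ⟨τ, rfl⟩ := exists_succ_comp_eq_iff.2 hne
    exact ⟨τ, avoids112_succ_comp_iff.1 hσ, rfl⟩
  · rintro ⟨τ, hτ, rfl⟩
    exact ⟨avoids112_succ_comp_iff.2 hτ, fun i => Fin.succ_ne_zero _⟩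

theorem Avoids112.eq_of_eq_zero {σ : Fin (n + 1) → Fin (k + 1)} (hσ : Avoids112 σ)
    (hlast : σ (Fin.last n) ≠ 0) {p q : Fin (n + 1)} (hp : σ p = 0) (hq : σ q = 0) : p = q := by
  have lt_last {i : Fin (n + 1)} (hi : σ i = 0) : i < Fin.last n :=
    Fin.lt_last_iff_ne_last.2 fun h => hlast (h ▸ hi)
  exact hσ.eq_of_lt (lt_last hp) (lt_last hq) (hp.trans hq.symm)
    (hp ▸ Fin.pos_iff_ne_zero.2 hlast)

theorem words112_castSucc_eq_zero_last_ne_zero (p : Fin n) :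
    {σ ∈ words112 (n + 1) (k + 1) | σ p.castSucc = 0 ∧ σ (Fin.last n) ≠ 0} =
      (fun τ => p.castSucc.insertNth 0 (Fin.succ ∘ τ)) '' words112 n k := by
  ext σ
  constructor
  · rintro ⟨hσ, hp, hlast⟩
    have hne (i : Fin n) : p.castSucc.removeNth σ i ≠ 0 := fun hi =>
      Fin.succAbove_ne p.castSucc i (hσ.eq_of_eq_zero hlast hi hp)
    obtain ⟨τ, hτ⟩ := exists_succ_comp_eq_iff.2 hne
    have hinsert : p.castSucc.insertNth 0 (Fin.succ ∘ τ) = σ := by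
      rw [hτ, ← hp, Fin.insertNth_self_removeNth]
    exact ⟨τ, (avoids112_insertNth_zero_succ_comp_iff _).1 (hinsert ▸ hσ), hinsert⟩
  · rintro ⟨τ, hτ, rfl⟩
    obtain ⟨i, hi⟩ := Fin.exists_succAbove_eq (Fin.castSucc_lt_last p).ne'
    refine ⟨(avoids112_insertNth_zero_succ_comp_iff _).2 hτ, Fin.insertNth_apply_same .., ?_⟩
    simpa only [← hi, Fin.insertNth_apply_succAbove, Function.comp_apply] using
      Fin.succ_ne_zero (τ i)

theorem ncard_words112_last_eq_zero :
    {σ ∈ words112 (n + 1) (k + 1) | σ (Fin.last n) = 0}.ncard = (words112 n (k + 1)).ncard := by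
  rw [words112_last_eq_zero]
  exact Set.ncard_image_of_injective _ (Fin.snoc_left_injective (α := fun _ => Fin (k + 1)) 0)

theorem ncard_words112_forall_ne_zero :
    {σ ∈ words112 n (k + 1) | ∀ i, σ i ≠ 0}.ncard = (words112 n k).ncard := by
  rw [words112_forall_ne_zero]
  exact Set.ncard_image_of_injective _ (Fin.succ_injective k).comp_left

theorem ncard_words112_castSucc_eq_zero_last_ne_zero (p : Fin n) :
    {σ ∈ words112 (n + 1) (k + 1) | σ p.castSucc = 0 ∧ σ (Fin.last n) ≠ 0}.ncard =
      (words112 n k).ncard := by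
  rw [words112_castSucc_eq_zero_last_ne_zero]
  exact Set.ncard_image_of_injective _
    ((Fin.insertNth_right_injective (α := fun _ => Fin (k + 1)) 0).comp
      (Fin.succ_injective k).comp_left)

theorem ncard_words112_exists_eq_zero_last_ne_zero :
    {σ ∈ words112 (n + 1) (k + 1) | (∃ i, σ i = 0) ∧ σ (Fin.last n) ≠ 0}.ncard =
      n * (words112 n k).ncard := by
  have hUnion : {σ ∈ words112 (n + 1) (k + 1) | (∃ i, σ i = 0) ∧ σ (Fin.last n) ≠ 0} =
      ⋃ p : Fin n,
        {σ ∈ words112 (n + 1) (k + 1) | σ p.castSucc = 0 ∧ σ (Fin.last n) ≠ 0} := by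
    ext σ
    simp only [Fin.exists_fin_succ', Set.mem_ofPred_eq, Set.mem_iUnion]
    tauto
  have hdisj : Pairwise (Function.onFun Disjoint fun p : Fin n =>
      {σ ∈ words112 (n + 1) (k + 1) | σ p.castSucc = 0 ∧ σ (Fin.last n) ≠ 0}) := by
    refine fun p q hpq => Set.disjoint_left.2 ?_
    rintro σ ⟨hσ, hp, hlast⟩ ⟨-, hq, -⟩
    exact hpq (Fin.castSucc_injective n (Avoids112.eq_of_eq_zero hσ hlast hp hq))
  rw [hUnion, Set.ncard_iUnion_of_finite (fun _ => Set.toFinite _) hdisj,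
    finsum_eq_sum_of_fintype]
  simp only [ncard_words112_castSucc_eq_zero_last_ne_zero, Finset.sum_const, Finset.card_univ,
    Fintype.card_fin, smul_eq_mul]

end Decomposition

theorem ncard_words112_succ_succ (n k : ℕ) :
    (words112 (n + 1) (k + 1)).ncard =
      (words112 n (k + 1)).ncard + (words112 (n + 1) k).ncard + n * (words112 n k).ncard := by
  set W := words112 (n + 1) (k + 1)
  have hcases : W = {σ ∈ W | σ (Fin.last n) = 0} ∪ {σ ∈ W | ∀ i, σ i ≠ 0} ∪
      {σ ∈ W | (∃ i, σ i = 0) ∧ σ (Fin.last n) ≠ 0} := by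
    ext σ
    simp only [Set.mem_union, Set.mem_ofPred_eq, ← not_exists]
    tauto
  have hzeroFree : Disjoint {σ ∈ W | σ (Fin.last n) = 0} {σ ∈ W | ∀ i, σ i ≠ 0} :=
    Set.disjoint_left.2 fun σ hσ hne => hne.2 _ hσ.2
  have hinnerZero : Disjoint ({σ ∈ W | σ (Fin.last n) = 0} ∪ {σ ∈ W | ∀ i, σ i ≠ 0})
      {σ ∈ W | (∃ i, σ i = 0) ∧ σ (Fin.last n) ≠ 0} := by
    rw [Set.disjoint_left]
    rintro σ (hlast | hne) ⟨-, ⟨i, hi⟩, hlast'⟩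
    exacts [hlast' hlast.2, hne.2 i hi]
  rw [hcases, Set.ncard_union_eq hinnerZero, Set.ncard_union_eq hzeroFree,
    ncard_words112_last_eq_zero, ncard_words112_forall_ne_zero,
    ncard_words112_exists_eq_zero_last_ne_zero]

/-- f_{112}(n,k) - f_{112}(n,k-1) = f_{112}(n-1,k) + (n-1)·f_{112}(n-1,k-1) for n,k ≥ 1. -/
theorem avoid_112_recurrence (n k : ℕ) (hn : 1 ≤ n) (hk : 1 ≤ k) :
    (avoiders n k {[1, 1, 2]} : ℤ) - (avoiders n (k - 1) {[1, 1, 2]} : ℤ) =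
      ((avoiders (n - 1) k {[1, 1, 2]} +
        (n - 1) * avoiders (n - 1) (k - 1) {[1, 1, 2]} : ℕ) : ℤ) := by
  obtain ⟨n, rfl⟩ := Nat.exists_eq_add_of_le' hn
  obtain ⟨k, rfl⟩ := Nat.exists_eq_add_of_le' hk
  simp only [Nat.add_sub_cancel, avoiders_112_eq_ncard, ncard_words112_succ_succ]
  push_cast
  ring
end

section
/- The pairs of patterns {111,112} and {111,121} are Wilf-equivalent: for all integers n ≥ 0 and k ≥ 0, the number of words in [k]^n avoiding both 111 and 112 equals the number of words in [k]^n avoiding both 111 and 121. -/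
/-!
Avoiding `{111, 112}` means: if a letter `a` occurs at positions `i < j`, then every letter after
`j` is smaller than `a`. For `{111, 121}`, it is the letters between `i` and `j` that must be
smaller. In either case, delete all occurrences of the smallest letter from a word: the result is
an arbitrary shorter avoider over a smaller alphabet, and the set of deleted positions is an
arbitrary clique in the graph joining two positions when no third position lies after both,
respectively between them. This graph is a star for `{111, 112}` and a path for `{111, 121}`. Both
are trees, and a tree on `n` vertices has `1`, `n`, `n - 1` cliques of sizes `0`, `1`, `2` and no
larger ones, so the two counts satisfy the same recurrence.
-/

section TreeCliques

open SimpleGraph Finset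

variable {V M : Type*} [Fintype V] [DecidableEq V] {G H : SimpleGraph V} [DecidableRel G.Adj]
  [DecidableRel H.Adj] [AddCommMonoid M]

theorem card_cliqueFinset_two : #(G.cliqueFinset 2) = #G.edgeFinset := by
  symm
  refine card_bij (fun e _ ↦ e.toFinset) ?_ ?_ ?_
  · rintro ⟨a, b⟩ hab
    have hadj : G.Adj a b := by simpa using hab
    simp [isNClique_iff, Sym2.toFinset_mk_eq, hadj, hadj.ne]
  · intro e _ e' _ h
    ext a
    rw [← Sym2.mem_toFinset, h, Sym2.mem_toFinset]
  · intro S hS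
    obtain ⟨hclique, hcard⟩ := (isNClique_iff G).mp (mem_cliqueFinset_iff.mp hS)
    obtain ⟨a, b, hab, rfl⟩ := card_eq_two.mp hcard
    refine ⟨s(a, b), ?_, Sym2.toFinset_mk_eq⟩
    simpa [hab, isClique_pair] using hclique

theorem sum_isClique_of_cliqueFree_three (hG : G.CliqueFree 3) (g : ℕ → M) :
    ∑ S ∈ {S : Finset V | G.IsClique S}, g #S =
      g 0 + Fintype.card V • g 1 + #G.edgeFinset • g 2 := by
  have hcard : ∀ S ∈ ({S : Finset V | G.IsClique S} : Finset (Finset V)), #S ∈ range 3 := by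
    intro S hS
    by_contra! hlarge
    exact hG.mono (by simpa using hlarge) S ⟨by simpa using hS, rfl⟩
  have hsize (j : ℕ) :
      ({S : Finset V | G.IsClique S ∧ #S = j} : Finset (Finset V)) = G.cliqueFinset j := by
    simp only [cliqueFinset, isNClique_iff]
  have hone : #(G.cliqueFinset 1) = Fintype.card V := by
    have : G.cliqueFinset 1 = univ.image ({·} : V → Finset V) := by
      ext S
      simp [eq_comm]
    rw [this, card_image_of_injective _ singleton_injective, card_univ]
  have hzero : G.cliqueFinset 0 = {∅} := by
    ext S
    simp
  rw [← sum_fiberwise_of_maps_to' hcard]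
  simp only [filter_filter, hsize, sum_const, sum_range_succ, range_zero, sum_empty, zero_add, hone,
    hzero, card_singleton, one_smul, card_cliqueFinset_two]

theorem sum_isClique_eq_of_isTree (hG : G.IsTree) (hH : H.IsTree) (g : ℕ → M) :
    ∑ S ∈ {S : Finset V | G.IsClique S}, g #S = ∑ S ∈ {S : Finset V | H.IsClique S}, g #S := by
  have hedges : #G.edgeFinset = #H.edgeFinset :=
    Nat.succ_injective (hG.card_edgeFinset.trans hH.card_edgeFinset.symm)
  rw [sum_isClique_of_cliqueFree_three (hG.isAcyclic.cliqueFree le_rfl),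
    sum_isClique_of_cliqueFree_three (hH.isAcyclic.cliqueFree le_rfl), hedges]

theorem isTree_pathGraph (m : ℕ) : (pathGraph (m + 1)).IsTree := by
  refine isTree_iff_connected_and_card.mpr ⟨pathGraph_connected m, le_antisymm ?_
    (pathGraph_connected m).card_vert_le_card_edgeSet_add_one⟩
  let edge (a : Fin m) : (pathGraph (m + 1)).edgeSet :=
    ⟨s(a.castSucc, a.succ), by simp [pathGraph_adj]⟩
  have hedge : edge.Surjective := by
    rintro ⟨⟨i, j⟩, hij⟩
    have hadj : i.val + 1 = j.val ∨ j.val + 1 = i.val := pathGraph_adj.mp hij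
    rcases hadj with h | h
    · exact ⟨⟨i, by omega⟩, Subtype.ext (congrArg₂ (s(·, ·)) rfl (Fin.ext h))⟩
    · exact ⟨⟨j, by omega⟩,
        Subtype.ext ((congrArg₂ (s(·, ·)) rfl (Fin.ext h)).trans Sym2.eq_swap)⟩
  simpa using Nat.card_le_card_of_surjective edge hedge

end TreeCliques

/-- A rule saying, for positions `i < j` of a word carrying the same letter, at which positions `w`
the letter must be smaller than that one (`Blocks i j w`). The relation is given on all linearly
ordered sets of positions at once, compatibly with order embeddings, so that it makes sense to
delete letters from a word. -/
structure BlockingRule where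
  Blocks : ∀ {ι : Type} [LinearOrder ι], ι → ι → ι → Prop
  blocks_map_iff : ∀ {ι κ : Type} [LinearOrder ι] [LinearOrder κ] (e : ι ↪o κ) (i j w : ι),
    Blocks (e i) (e j) (e w) ↔ Blocks i j w

namespace BlockingRule

open Finset

variable (R : BlockingRule) {ι κ α : Type} [LinearOrder ι] [LinearOrder κ] [LinearOrder α] {k : ℕ}

/-- The words avoiding the patterns that a blocking rule stands for: letters at positions blocked by
two equal letters are smaller than these. -/
def Avoids (σ : ι → α) : Prop :=
  ∀ ⦃i j w⦄, i < j → R.Blocks i j w → σ i = σ j → σ w < σ i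

/-- The graph joining two positions that block no third position. Its cliques are the sets of
positions that the smallest letter may occupy. -/
def freeGraph (ι : Type) [LinearOrder ι] : SimpleGraph ι :=
  .fromRel fun i j ↦ i < j ∧ ∀ w, ¬ R.Blocks i j w

/-- The number of words over `[k]` with positions in `ι` that avoid the patterns of a blocking
rule. -/
noncomputable def numAvoiding (ι : Type) [LinearOrder ι] (k : ℕ) : ℕ :=
  Nat.card {σ : ι → Fin k // R.Avoids σ}

theorem isClique_freeGraph_iff {S : Set ι} :
    (R.freeGraph ι).IsClique S ↔ ∀ i ∈ S, ∀ j ∈ S, i < j → ∀ w, ¬ R.Blocks i j w := by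
  constructor
  · intro h i hi j hj hij
    rcases (h hi hj hij.ne).2 with hfree | hfree
    · exact hfree.2
    · exact absurd hfree.1 hij.asymm
  · intro h i hi j hj hne
    refine ⟨hne, hne.lt_or_gt.imp ?_ ?_⟩ <;> intro hlt
    · exact ⟨hlt, h i hi j hj hlt⟩
    · exact ⟨hlt, h j hj i hi hlt⟩

theorem avoids_comp_orderIso_iff (e : ι ≃o κ) (σ : κ → α) : R.Avoids (σ ∘ e) ↔ R.Avoids σ := by
  constructor
  · intro h i j w hij hblocks heq
    have hblocks' : R.Blocks (e.symm i) (e.symm j) (e.symm w) :=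
      (R.blocks_map_iff e.symm.toOrderEmbedding i j w).mpr hblocks
    simpa using h (e.symm.lt_iff_lt.mpr hij) hblocks' (by simpa using heq)
  · intro h i j w hij hblocks
    exact h (e.lt_iff_lt.mpr hij) ((R.blocks_map_iff e.toOrderEmbedding i j w).mpr hblocks)

theorem numAvoiding_congr (e : ι ≃o κ) (k : ℕ) : R.numAvoiding ι k = R.numAvoiding κ k :=
  Nat.card_congr <| (e.toEquiv.arrowCongr (Equiv.refl (Fin k))).subtypeEquiv fun σ ↦
    (R.avoids_comp_orderIso_iff e.symm σ).symm

section DeleteZeros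

/-- The word with letter `0` exactly at the positions in `S`, and with the letters of `τ`, raised by
one, at the other positions. -/
def insertZeros (S : Finset ι) (τ : {i // i ∉ S} → Fin k) (i : ι) : Fin (k + 1) :=
  if h : i ∈ S then 0 else (τ ⟨i, h⟩).succ

variable {S : Finset ι} {τ : {i // i ∉ S} → Fin k} {i : ι}

theorem insertZeros_eq_zero_iff : insertZeros S τ i = 0 ↔ i ∈ S := by
  by_cases h : i ∈ S <;> simp [insertZeros, h]

theorem insertZeros_of_notMem (h : i ∉ S) : insertZeros S τ i = (τ ⟨i, h⟩).succ :=
  dif_neg h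

theorem bijective_insertZeros [Finite ι] : Function.Bijective
    fun p : Σ S : Finset ι, {i // i ∉ S} → Fin k ↦ insertZeros p.1 p.2 := by
  constructor
  · rintro ⟨S, τ⟩ ⟨S', τ'⟩ h
    have hval (i : ι) : insertZeros S τ i = insertZeros S' τ' i := congrFun h i
    obtain rfl : S = S' := by
      ext i
      rw [← insertZeros_eq_zero_iff (τ := τ), hval, insertZeros_eq_zero_iff]
    congr
    ext1 ⟨i, hi⟩
    simpa [insertZeros_of_notMem hi] using hval i
  · have := Fintype.ofFinite ι
    intro σ
    refine ⟨⟨univ.filter (σ · = 0), fun i ↦ (σ i).pred (by simpa using i.2)⟩, funext fun i ↦ ?_⟩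
    by_cases h : σ i = 0 <;> simp [insertZeros, h]

theorem avoids_insertZeros_iff :
    R.Avoids (insertZeros S τ) ↔ (R.freeGraph ι).IsClique S ∧ R.Avoids τ := by
  have hsub (i j w : {i // i ∉ S}) : R.Blocks i.1 j.1 w.1 ↔ R.Blocks i j w :=
    R.blocks_map_iff (OrderEmbedding.subtype _) i j w
  rw [isClique_freeGraph_iff]
  constructor
  · refine fun h ↦ ⟨fun i hi j hj hij w hblocks ↦ ?_, fun i j w hij hblocks heq ↦ ?_⟩
    · have hi0 : insertZeros S τ i = 0 := insertZeros_eq_zero_iff.mpr hi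
      have hj0 : insertZeros S τ j = 0 := insertZeros_eq_zero_iff.mpr hj
      exact Fin.not_lt_zero _ (hi0 ▸ h hij hblocks (hi0.trans hj0.symm))
    · simpa [insertZeros_of_notMem, i.2, j.2, w.2, heq] using
        @h i j w hij ((hsub i j w).mpr hblocks)
  · rintro ⟨hclique, hτ⟩ i j w hij hblocks heq
    have hmem : i ∈ S ↔ j ∈ S := by
      rw [← insertZeros_eq_zero_iff (τ := τ), heq, insertZeros_eq_zero_iff]
    have hi : i ∉ S := fun hi ↦ hclique i hi j (hmem.mp hi) hij w hblocks
    have hj : j ∉ S := mt hmem.mpr hi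
    by_cases hw : w ∈ S
    · rw [insertZeros_eq_zero_iff.mpr hw, Fin.pos_iff_ne_zero, ne_eq, insertZeros_eq_zero_iff]
      exact hi
    · rw [insertZeros_of_notMem hi, insertZeros_of_notMem hj, Fin.succ_inj] at heq
      rw [insertZeros_of_notMem hi, insertZeros_of_notMem hw, Fin.succ_lt_succ_iff]
      exact @hτ ⟨i, hi⟩ ⟨j, hj⟩ ⟨w, hw⟩ hij ((hsub _ _ _).mp hblocks) heq

end DeleteZeros

open Classical in
theorem numAvoiding_succ [Fintype ι] (k : ℕ) :
    R.numAvoiding ι (k + 1) =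
      ∑ S ∈ {S : Finset ι | (R.freeGraph ι).IsClique S}, R.numAvoiding {i // i ∉ S} k := by
  let insert : {p : Σ S : Finset ι, {i // i ∉ S} → Fin k //
      (R.freeGraph ι).IsClique p.1 ∧ R.Avoids p.2} ≃ {σ : ι → Fin (k + 1) // R.Avoids σ} :=
    (Equiv.ofBijective _ bijective_insertZeros).subtypeEquiv fun _ ↦ R.avoids_insertZeros_iff.symm
  let regroup : {p : Σ S : Finset ι, {i // i ∉ S} → Fin k //
      (R.freeGraph ι).IsClique p.1 ∧ R.Avoids p.2} ≃
        Σ S : Finset ι, {τ : {i // i ∉ S} → Fin k // (R.freeGraph ι).IsClique S ∧ R.Avoids τ} :=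
    { toFun p := ⟨p.1.1, p.1.2, p.2⟩
      invFun p := ⟨⟨p.1, p.2.1⟩, p.2.2⟩ }
  rw [numAvoiding, ← Nat.card_congr (regroup.symm.trans insert), Nat.card_sigma, sum_filter]
  refine sum_congr rfl fun S _ ↦ ?_
  split_ifs with hS <;> simp [numAvoiding, hS]

open Classical in
theorem numAvoiding_fin_succ (n k : ℕ) :
    R.numAvoiding (Fin n) (k + 1) =
      ∑ S ∈ {S : Finset (Fin n) | (R.freeGraph (Fin n)).IsClique S},
        R.numAvoiding (Fin (n - #S)) k := by
  rw [numAvoiding_succ]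
  refine sum_congr rfl fun S _ ↦ R.numAvoiding_congr (Fintype.orderIsoFinOfCardEq _ ?_).symm k
  simp [Fintype.card_subtype_compl]

theorem numAvoiding_eq_of_isTree {R R' : BlockingRule}
    (hR : ∀ m, (R.freeGraph (Fin (m + 1))).IsTree) (hR' : ∀ m, (R'.freeGraph (Fin (m + 1))).IsTree)
    (n k : ℕ) : R.numAvoiding (Fin n) k = R'.numAvoiding (Fin n) k := by
  classical
  induction k generalizing n with
  | zero =>
    exact Nat.card_congr <| Equiv.subtypeEquivRight fun σ ↦
      iff_of_true (fun i ↦ (σ i).elim0) (fun i ↦ (σ i).elim0)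
  | succ k ih =>
    cases n with
    | zero =>
      exact Nat.card_congr <| Equiv.subtypeEquivRight fun σ ↦
        iff_of_true (fun i ↦ i.elim0) (fun i ↦ i.elim0)
    | succ m =>
      simp only [numAvoiding_fin_succ, ih]
      exact sum_isClique_eq_of_isTree (hR m) (hR' m) fun s ↦ R'.numAvoiding (Fin (m + 1 - s)) k

/-- The rule of the patterns `111` and `112`: two equal letters block all later positions. -/
def after : BlockingRule where
  Blocks _ j w := j < w
  blocks_map_iff e _ _ _ := e.lt_iff_lt

/-- The rule of the patterns `111` and `121`: two equal letters block all positions between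
them. -/
def between : BlockingRule where
  Blocks i j w := i < w ∧ w < j
  blocks_map_iff e _ _ _ := and_congr e.lt_iff_lt e.lt_iff_lt

theorem freeGraph_after (m : ℕ) :
    after.freeGraph (Fin (m + 1)) = SimpleGraph.starGraph (Fin.last m) := by
  have hfree (j : Fin (m + 1)) : (∀ w, ¬ j < w) ↔ j = Fin.last m :=
    ⟨fun h ↦ Fin.last_le_iff.mp (not_lt.mp (h _)), fun h w ↦ h ▸ (Fin.le_last w).not_gt⟩
  ext i j
  simp only [freeGraph, after, SimpleGraph.fromRel_adj, hfree, SimpleGraph.starGraph_adj]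
  simp only [Fin.ext_iff, Fin.lt_def, Fin.val_last, ne_eq]
  omega

theorem freeGraph_between (n : ℕ) : between.freeGraph (Fin n) = SimpleGraph.pathGraph n := by
  have hfree (i j : Fin n) : (i < j ∧ ∀ w, ¬ (i < w ∧ w < j)) ↔ i ⋖ j := by
    simp only [CovBy, not_and]
  ext i j
  simp only [freeGraph, between, SimpleGraph.fromRel_adj, hfree, SimpleGraph.pathGraph,
    SimpleGraph.hasse_adj, and_iff_right_iff_imp]
  rintro (h | h)
  · exact h.ne
  · exact h.ne'

end BlockingRule

section Patterns

theorem cmp_eq_cmp_iff {α β : Type*} [LinearOrder α] [LinearOrder β] {a b : α} {x y : β} :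
    cmp a b = cmp x y ↔ (a < b ↔ x < y) ∧ (a = b ↔ x = y) := by
  refine ⟨fun h ↦ ⟨lt_iff_lt_of_cmp_eq_cmp h, eq_iff_eq_of_cmp_eq_cmp h⟩, fun ⟨hlt, heq⟩ ↦ ?_⟩
  apply Ordering.Compares.cmp_eq
  rcases lt_trichotomy x y with h | rfl | h
  · rwa [(cmp_eq_lt_iff x y).mpr h, Ordering.compares_lt, hlt]
  · rw [cmp_self_eq_eq, Ordering.compares_eq, heq]
  · rwa [(cmp_eq_gt_iff x y).mpr h, Ordering.compares_gt, gt_iff_lt, ← not_le, le_iff_lt_or_eq,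
      hlt, heq, ← le_iff_lt_or_eq, not_le]

variable {n k : ℕ} (σ : Fin n → Fin k)

theorem wordContains_triple_iff (x y z : ℕ) :
    WordContains σ [x, y, z] ↔ ∃ i j l, i < j ∧ j < l ∧ cmp (σ i) (σ j) = cmp x y ∧
      cmp (σ i) (σ l) = cmp x z ∧ cmp (σ j) (σ l) = cmp y z := by
  simp only [WordContains, ← cmp_eq_cmp_iff]
  constructor
  · rintro ⟨f, hf, h⟩
    exact ⟨f 0, f 1, f 2, hf (by simp), hf (by simp [Fin.lt_def]), h 0 1, h 0 2, h 1 2⟩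
  · rintro ⟨i, j, l, hij, hjl, hxy, hxz, hyz⟩
    refine ⟨![i, j, l], Fin.strictMono_iff_lt_succ.mpr fun a ↦ ?_, fun a b ↦ ?_⟩
    · fin_cases a <;> assumption
    · have := cmp_eq_cmp_symm.mp hxy
      have := cmp_eq_cmp_symm.mp hxz
      have := cmp_eq_cmp_symm.mp hyz
      fin_cases a <;> fin_cases b <;> first | assumption | simp only [cmp_self_eq_eq]

theorem wordContains_111_iff :
    WordContains σ [1, 1, 1] ↔ ∃ i j l, i < j ∧ j < l ∧ σ i = σ j ∧ σ i = σ l := by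
  simp only [wordContains_triple_iff, cmp_self_eq_eq, cmp_eq_eq_iff]
  grind

theorem wordContains_112_iff_s8 :
    WordContains σ [1, 1, 2] ↔ ∃ i j l, i < j ∧ j < l ∧ σ i = σ j ∧ σ i < σ l := by
  have hlt : cmp 1 2 = Ordering.lt := rfl
  simp only [wordContains_triple_iff, hlt, cmp_self_eq_eq, cmp_eq_eq_iff, cmp_eq_lt_iff]
  grind

theorem wordContains_121_iff_s8 :
    WordContains σ [1, 2, 1] ↔ ∃ i j l, i < j ∧ j < l ∧ σ i = σ l ∧ σ i < σ j := by
  have hlt : cmp 1 2 = Ordering.lt := rfl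
  have hgt : cmp 2 1 = Ordering.gt := rfl
  simp only [wordContains_triple_iff, hlt, hgt, cmp_self_eq_eq, cmp_eq_eq_iff, cmp_eq_lt_iff,
    cmp_eq_gt_iff]
  grind

theorem avoids_111_112_iff :
    (∀ τ ∈ ({[1, 1, 1], [1, 1, 2]} : Set (List ℕ)), ¬ WordContains σ τ) ↔
      BlockingRule.after.Avoids σ := by
  simp only [Set.mem_insert_iff, Set.mem_singleton_iff, forall_eq_or_imp, forall_eq,
    wordContains_111_iff, wordContains_112_iff_s8, BlockingRule.Avoids, BlockingRule.after]
  grind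

theorem avoids_111_121_iff :
    (∀ τ ∈ ({[1, 1, 1], [1, 2, 1]} : Set (List ℕ)), ¬ WordContains σ τ) ↔
      BlockingRule.between.Avoids σ := by
  simp only [Set.mem_insert_iff, Set.mem_singleton_iff, forall_eq_or_imp, forall_eq,
    wordContains_111_iff, wordContains_121_iff_s8, BlockingRule.Avoids, BlockingRule.between]
  grind

end Patterns

/-- The pairs {111,112} and {111,121} are Wilf-equivalent. -/
theorem avoid_111_112_eq_avoid_111_121 (n k : ℕ) :
    avoiders n k {[1, 1, 1], [1, 1, 2]} = avoiders n k {[1, 1, 1], [1, 2, 1]} := by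
  have hafter (m : ℕ) : (BlockingRule.after.freeGraph (Fin (m + 1))).IsTree :=
    BlockingRule.freeGraph_after m ▸ SimpleGraph.isTree_starGraph (Fin.last m)
  have hbetween (m : ℕ) : (BlockingRule.between.freeGraph (Fin (m + 1))).IsTree :=
    BlockingRule.freeGraph_between (m + 1) ▸ isTree_pathGraph m
  calc
    avoiders n k {[1, 1, 1], [1, 1, 2]} = BlockingRule.after.numAvoiding (Fin n) k :=
      Nat.card_congr (Equiv.subtypeEquivRight avoids_111_112_iff)
    _ = BlockingRule.between.numAvoiding (Fin n) k :=
      BlockingRule.numAvoiding_eq_of_isTree hafter hbetween n k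
    _ = avoiders n k {[1, 1, 1], [1, 2, 1]} :=
      (Nat.card_congr (Equiv.subtypeEquivRight avoids_111_121_iff)).symm
end

section
/- For the number f_{112,221}(n,k) of words in [k]^n avoiding both patterns 112 and 221: if n ≥ k+1 and k ≥ 1 then f_{112,221}(n,k) = ∑_{j=1}^{k} j · j! · C(k,j); and if k ≥ n ≥ 2 then f_{112,221}(n,k) = n! · C(k,n) + ∑_{j=1}^{n-1} j · j! · C(k,j). -/
/-!
A word avoids 112 and 221 exactly when, after the second occurrence of a letter, only that letter
occurs. An injective word of length `n` can therefore be extended by any of the `k` letters, and a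
non-injective one only by its unique repeated letter. Since `n` of the `k` extensions of an
injective word repeat a letter, the number of avoiders with a repeated letter grows by
`n * k.descFactorial n` from length `n` to length `n + 1`.
-/

/-- The property of a word that, once a letter has occurred twice, only that letter occurs. For
words over a linearly ordered alphabet this is avoidance of both 112 and 221. -/
def ConstantAfterRepeat {ι α : Type*} [LT ι] (σ : ι → α) : Prop :=
  ∀ ⦃a b c : ι⦄, a < b → b < c → σ a = σ b → σ c = σ a

instance {ι α : Type*} [Fintype ι] [LT ι] [DecidableLT ι] [DecidableEq α] (σ : ι → α) :
    Decidable (ConstantAfterRepeat σ) :=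
  inferInstanceAs <| Decidable <| ∀ a b c : ι, a < b → b < c → σ a = σ b → σ c = σ a

section Patterns

variable {n k : ℕ} {σ : Fin n → Fin k}

theorem wordContains_xxy_iff {x y : ℕ} :
    WordContains σ [x, x, y] ↔ ∃ a b c, a < b ∧ b < c ∧ σ a = σ b ∧
      (σ a < σ c ↔ x < y) ∧ (σ c < σ a ↔ y < x) := by
  constructor
  · rintro ⟨f, hf, h⟩
    exact ⟨f (0 : Fin 3), f (1 : Fin 3), f (2 : Fin 3), hf (by decide : (0 : Fin 3) < 1),
      hf (by decide : (1 : Fin 3) < 2), (h (0 : Fin 3) (1 : Fin 3)).2.2 rfl,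
      (h (0 : Fin 3) (2 : Fin 3)).1, (h (2 : Fin 3) (0 : Fin 3)).1⟩
  · rintro ⟨a, b, c, hab, hbc, hrepeat, hlt, hgt⟩
    have hval : σ a = σ c ↔ x = y := by
      rw [le_antisymm_iff, le_antisymm_iff, ← not_lt, ← not_lt, hlt, hgt, not_lt, not_lt]
    refine ⟨(![a, b, c] : Fin 3 → Fin n), ?_, fun i j => ?_⟩
    · exact Fin.strictMono_iff_lt_succ.2 (by simp [Fin.forall_fin_two, hab, hbc])
    · change Fin 3 at i j
      fin_cases i <;> fin_cases j <;> simp [← hrepeat, hlt, hgt, hval, eq_comm (a := σ c),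
        eq_comm (a := y)]

theorem avoids_112_221_iff_constantAfterRepeat :
    (∀ τ ∈ ({[1, 1, 2], [2, 2, 1]} : Set (List ℕ)), ¬ WordContains σ τ) ↔
      ConstantAfterRepeat σ := by
  simp only [Set.mem_insert_iff, Set.mem_singleton_iff, forall_eq_or_imp, forall_eq,
    wordContains_xxy_iff]
  constructor
  · rintro ⟨h112, h221⟩ a b c hab hbc hrepeat
    by_contra hne
    rcases lt_or_gt_of_ne hne with hlt | hgt
    · exact h221 ⟨a, b, c, hab, hbc, hrepeat, by simp [hlt.le], by simp [hlt]⟩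
    · exact h112 ⟨a, b, c, hab, hbc, hrepeat, by simp [hgt], by simp [hgt.le]⟩
  · intro h
    constructor <;> rintro ⟨a, b, c, hab, hbc, hrepeat, hlt, hgt⟩ <;>
      simp [h hab hbc hrepeat] at hlt hgt

end Patterns

section Extensions

theorem constantAfterRepeat_of_injective {ι α : Type*} [Preorder ι] {σ : ι → α}
    (hσ : Function.Injective σ) : ConstantAfterRepeat σ :=
  fun _ _ _ hab _ hrepeat => absurd (hσ hrepeat) hab.ne

theorem ConstantAfterRepeat.eq_of_repeat_of_repeat {ι α : Type*} [LinearOrder ι] {σ : ι → α}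
    (hσ : ConstantAfterRepeat σ) {a b a' b' : ι} (hab : a < b) (hrepeat : σ a = σ b)
    (hab' : a' < b') (hrepeat' : σ a' = σ b') : σ a = σ a' := by
  rcases lt_trichotomy b b' with h | rfl | h
  · rw [hrepeat', hσ hab h hrepeat]
  · rw [hrepeat, hrepeat']
  · rw [hrepeat, hσ hab' h hrepeat']

variable {n : ℕ} {α : Type*} {p : Fin n → α}

theorem constantAfterRepeat_snoc_iff {x : α} :
    ConstantAfterRepeat (Fin.snoc p x : Fin (n + 1) → α) ↔
      ConstantAfterRepeat p ∧ ∀ a b, a < b → p a = p b → x = p a := by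
  simp only [ConstantAfterRepeat, Fin.forall_fin_succ', Fin.snoc_castSucc, Fin.snoc_last,
    Fin.castSucc_lt_castSucc_iff, Fin.castSucc_lt_last, lt_irrefl]
  grind

theorem constantAfterRepeat_snoc_of_injective (hp : Function.Injective p) (x : α) :
    ConstantAfterRepeat (Fin.snoc p x : Fin (n + 1) → α) :=
  constantAfterRepeat_snoc_iff.2
    ⟨constantAfterRepeat_of_injective hp, fun _ _ hab hrepeat => absurd (hp hrepeat) hab.ne⟩

theorem ConstantAfterRepeat.existsUnique_snoc (hσ : ConstantAfterRepeat p)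
    (hp : ¬ Function.Injective p) :
    ∃! x, ConstantAfterRepeat (Fin.snoc p x : Fin (n + 1) → α) := by
  obtain ⟨a, b, hab, hrepeat⟩ : ∃ a b, a < b ∧ p a = p b := by
    contrapose! hp
    exact .of_lt_imp_ne hp
  refine ⟨p a, constantAfterRepeat_snoc_iff.2 ⟨hσ, fun a' b' hab' hrepeat' => ?_⟩, fun x hx => ?_⟩
  · exact hσ.eq_of_repeat_of_repeat hab hrepeat hab' hrepeat'
  · exact (constantAfterRepeat_snoc_iff.1 hx).2 a b hab hrepeat

end Extensions

section Counting

open Finset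

theorem card_filter_injective (ι α : Type*) [Fintype ι] [DecidableEq ι] [Fintype α]
    [DecidableEq α] :
    #{σ : ι → α | Function.Injective σ} = (Fintype.card α).descFactorial (Fintype.card ι) := by
  rw [← Fintype.card_subtype, Fintype.card_congr (Equiv.subtypeInjectiveEquivEmbedding ι α),
    Fintype.card_embedding_eq]

theorem card_filter_eq_sum_card_snoc (n : ℕ) (α : Type*) [Fintype α]
    (P : (Fin (n + 1) → α) → Prop) [DecidablePred P] :
    #{σ | P σ} = ∑ p : Fin n → α, #{x | P (Fin.snoc p x)} := by
  simp only [card_filter]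
  rw [← (Fin.snocEquiv fun _ => α).sum_comp, Fintype.sum_prod_type_right]
  rfl

theorem descFactorial_mul_eq_succ_add (k n : ℕ) :
    k.descFactorial n * k = k.descFactorial (n + 1) + n * k.descFactorial n := by
  rcases le_or_gt n k with h | h
  · rw [Nat.descFactorial_succ, ← add_mul, Nat.sub_add_cancel h, mul_comm]
  · simp [Nat.descFactorial_of_lt h]

theorem sum_range_mul_descFactorial {m n k : ℕ} (hmn : m < n) (hk : ∀ j < n, m < j → k < j) :
    ∑ j ∈ range n, j * k.descFactorial j =
      ∑ j ∈ Icc 1 m, j * j.factorial * k.choose j := by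
  simp only [mul_assoc, ← Nat.descFactorial_eq_factorial_mul_choose]
  refine (sum_subset (fun j hj => ?_) fun j hjn hjm => ?_).symm
  · simp only [mem_Icc, mem_range] at hj ⊢
    omega
  · simp only [mem_Icc, mem_range] at hjn hjm
    obtain rfl | hj : j = 0 ∨ m < j := by omega
    · exact zero_mul _
    · rw [Nat.descFactorial_of_lt (hk j hjn hj), mul_zero]

theorem card_constantAfterRepeat_eq_add_card_not_injective (ι α : Type*) [Fintype ι] [DecidableEq ι]
    [Preorder ι] [DecidableLT ι] [Fintype α] [DecidableEq α] :
    #{σ : ι → α | ConstantAfterRepeat σ} =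
      (Fintype.card α).descFactorial (Fintype.card ι) +
        #{σ : ι → α | ConstantAfterRepeat σ ∧ ¬ Function.Injective σ} := by
  have hinj : #{σ : ι → α | ConstantAfterRepeat σ ∧ Function.Injective σ} =
      (Fintype.card α).descFactorial (Fintype.card ι) := by
    simp only [and_iff_right_of_imp constantAfterRepeat_of_injective, card_filter_injective]
  rw [← card_filter_add_card_filter_not Function.Injective, filter_filter, filter_filter, hinj]

theorem card_constantAfterRepeat_snoc {n : ℕ} {α : Type*} [Fintype α] [DecidableEq α]
    (p : Fin n → α) :
    #{x | ConstantAfterRepeat (Fin.snoc p x : Fin (n + 1) → α)} =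
      (if Function.Injective p then Fintype.card α else 0) +
        if ConstantAfterRepeat p ∧ ¬ Function.Injective p then 1 else 0 := by
  by_cases hp : Function.Injective p
  · simp [hp, constantAfterRepeat_snoc_of_injective hp]
  by_cases hσ : ConstantAfterRepeat p
  · simpa [hp, hσ] using (Fintype.existsUnique_iff_card_one _).1 (hσ.existsUnique_snoc hp)
  · simp [hp, hσ, constantAfterRepeat_snoc_iff]

variable (n : ℕ) (α : Type*) [Fintype α] [DecidableEq α]

theorem card_constantAfterRepeat_succ :
    #{σ : Fin (n + 1) → α | ConstantAfterRepeat σ} =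
      (Fintype.card α).descFactorial n * Fintype.card α +
        #{p : Fin n → α | ConstantAfterRepeat p ∧ ¬ Function.Injective p} := by
  simp only [card_filter_eq_sum_card_snoc, card_constantAfterRepeat_snoc]
  rw [sum_add_distrib, ← sum_filter, sum_const, smul_eq_mul, card_filter_injective,
    Fintype.card_fin, ← card_filter]

theorem card_constantAfterRepeat :
    #{σ : Fin n → α | ConstantAfterRepeat σ} = (Fintype.card α).descFactorial n +
      ∑ j ∈ range n, j * (Fintype.card α).descFactorial j := by
  induction n with
  | zero => simp [constantAfterRepeat_of_injective, Function.injective_of_subsingleton]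
  | succ n ih =>
    rw [card_constantAfterRepeat_eq_add_card_not_injective, Fintype.card_fin,
      Nat.add_left_cancel_iff] at ih
    rw [card_constantAfterRepeat_succ, ih, descFactorial_mul_eq_succ_add, sum_range_succ]
    ring

theorem avoiders_112_221 (n k : ℕ) :
    avoiders n k {[1, 1, 2], [2, 2, 1]} =
      k.descFactorial n + ∑ j ∈ range n, j * k.descFactorial j := by
  simp only [avoiders, avoids_112_221_iff_constantAfterRepeat]
  rw [Nat.card_eq_fintype_card, Fintype.card_subtype, card_constantAfterRepeat, Fintype.card_fin]

end Counting

/-- f_{112,221}(n,k) = ∑_{j=1}^{k} j·j!·C(k,j) for n ≥ k+1, k ≥ 1; and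
f_{112,221}(n,k) = n!·C(k,n) + ∑_{j=1}^{n-1} j·j!·C(k,j) for k ≥ n ≥ 2. -/
theorem avoid_112_221_count (n k : ℕ) :
    (k + 1 ≤ n → 1 ≤ k →
      avoiders n k {[1, 1, 2], [2, 2, 1]} =
        ∑ j ∈ Finset.Icc 1 k, j * j.factorial * k.choose j) ∧
    (2 ≤ n → n ≤ k →
      avoiders n k {[1, 1, 2], [2, 2, 1]} =
        n.factorial * k.choose n + ∑ j ∈ Finset.Icc 1 (n - 1), j * j.factorial * k.choose j) := by
  rw [avoiders_112_221]
  constructor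
  · intro hkn _
    rw [Nat.descFactorial_of_lt hkn, zero_add, sum_range_mul_descFactorial hkn fun _ _ h => h]
  · intro hn _
    rw [Nat.descFactorial_eq_factorial_mul_choose,
      sum_range_mul_descFactorial (m := n - 1) (by omega) (by omega)]
end

section
/- For all integers n ≥ 1 and k ≥ 0, the number of words in [k]^n avoiding both patterns 121 and 212 equals ∑_{j=0}^{k} j! · C(k,j) · C(n-1, j-1), where C(n-1, j-1) = 0 when j = 0. -/
/-! A word avoids `121` and `212` iff the occurrences of each of its letters form a single block.
Count such words of length `n + 1` by their number `j + 1` of distinct letters: a nonempty such word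
extends on the left by repeating its first letter or by using a new one. The resulting
recurrence in `n` is Pascal's rule up to the factor `k (k - 1) ⋯ (k - j)`. -/

section Contiguous

open Finset

variable {ι κ α : Type*}

/-- A word indexed by `ι` is contiguous if no two occurrences of a letter are separated by a
different letter. On `Fin n` these are the words avoiding `121` and `212`. -/
def IsContiguous [Preorder ι] (σ : ι → α) : Prop :=
  ∀ a, (σ ⁻¹' {a}).OrdConnected

lemma IsContiguous.comp_monotone [Preorder ι] [Preorder κ] {σ : ι → α} {f : κ → ι}
    (hσ : IsContiguous σ) (hf : Monotone f) : IsContiguous (σ ∘ f) :=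
  fun a => (hσ a).preimage_mono hf

lemma isContiguous_iff_forall_lt [PartialOrder ι] {σ : ι → α} :
    IsContiguous σ ↔ ∀ x y z, x < y → y < z → σ x = σ z → σ y = σ x := by
  constructor
  · intro hσ x y z hxy hyz hxz
    exact (hσ (σ x)).out rfl hxz.symm ⟨hxy.le, hyz.le⟩
  · rintro hσ a
    refine Set.ordConnected_of_Ioo ?_
    rintro x rfl z hz - y ⟨hxy, hyz⟩
    exact hσ x y z hxy hyz hz.symm

lemma isContiguous_of_subsingleton [PartialOrder ι] [Subsingleton ι] (σ : ι → α) :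
    IsContiguous σ :=
  isContiguous_iff_forall_lt.2 fun x y _ hxy => absurd (Subsingleton.elim x y) hxy.ne

section Cons

variable {n : ℕ} {a : α}

lemma IsContiguous.of_cons {w : Fin n → α} (h : IsContiguous (Fin.cons a w : Fin (n + 1) → α)) :
    IsContiguous w :=
  h.comp_monotone Fin.strictMono_succ.monotone

lemma IsContiguous.cons_of_notMem_range {w : Fin n → α} (hw : IsContiguous w)
    (ha : a ∉ Set.range w) : IsContiguous (Fin.cons a w : Fin (n + 1) → α) := by
  rw [isContiguous_iff_forall_lt] at hw ⊢
  intro x y z hxy hyz hxz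
  obtain ⟨y, rfl⟩ := Fin.exists_succ_eq.2 (Fin.ne_zero_of_lt hxy)
  obtain ⟨z, rfl⟩ := Fin.exists_succ_eq.2 (Fin.ne_zero_of_lt hyz)
  cases x using Fin.cases with
  | zero => exact absurd ⟨z, hxz.symm⟩ ha
  | succ x => exact hw x y z (Fin.succ_lt_succ_iff.1 hxy) (Fin.succ_lt_succ_iff.1 hyz) hxz

lemma isContiguous_cons_of_ne_head {w : Fin (n + 1) → α} (ha : a ≠ w 0) :
    IsContiguous (Fin.cons a w : Fin (n + 2) → α) ↔ IsContiguous w ∧ a ∉ Set.range w := by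
  refine ⟨fun h => ⟨h.of_cons, ?_⟩, fun h => h.1.cons_of_notMem_range h.2⟩
  rintro ⟨i, rfl⟩
  have hi : 0 < i := Fin.pos_iff_ne_zero.2 fun hi => ha (congrArg w hi)
  exact ha (isContiguous_iff_forall_lt.1 h 0 (Fin.succ 0) i.succ (Fin.succ_pos 0)
    (Fin.succ_lt_succ_iff.2 hi) rfl).symm

lemma isContiguous_cons_head {w : Fin (n + 1) → α} :
    IsContiguous (Fin.cons (w 0) w : Fin (n + 2) → α) ↔ IsContiguous w := by
  refine ⟨.of_cons, fun hw => ?_⟩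
  have cons_eq : (Fin.cons (w 0) w : Fin (n + 2) → α) = w ∘ Fin.predAbove 0 := by
    ext i
    cases i using Fin.cases <;> simp
  exact cons_eq ▸ hw.comp_monotone (Fin.predAbove_right_monotone 0)

lemma image_univ_cons [DecidableEq α] {w : Fin n → α} :
    univ.image (Fin.cons a w : Fin (n + 1) → α) = insert a (univ.image w) := by
  ext
  simp [Fin.exists_fin_succ, eq_comm]

end Cons

section Counting

variable [Fintype α] [DecidableEq α]

variable (α) in
open scoped Classical in
/-- The contiguous words of length `n` over the alphabet `α` with exactly `j` distinct letters:
the classes by which the avoiders of `121` and `212` are counted. -/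
noncomputable def contiguousWords (n j : ℕ) : Finset (Fin n → α) :=
  {σ | IsContiguous σ ∧ #(univ.image σ) = j}

variable {n j : ℕ} {a : α}

lemma mem_contiguousWords {σ : Fin n → α} :
    σ ∈ contiguousWords α n j ↔ IsContiguous σ ∧ #(univ.image σ) = j := by
  simp [contiguousWords]

lemma contiguousWords_succ_zero : contiguousWords α (n + 1) 0 = ∅ := by
  simp [contiguousWords, filter_eq_empty_iff, ← nonempty_iff_ne_empty]

lemma cons_head_mem_contiguousWords {w : Fin (n + 1) → α} :
    Fin.cons (w 0) w ∈ contiguousWords α (n + 2) j ↔ w ∈ contiguousWords α (n + 1) j := by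
  simp only [mem_contiguousWords, isContiguous_cons_head, image_univ_cons,
    insert_eq_of_mem (mem_image_of_mem w (mem_univ 0))]

lemma cons_mem_contiguousWords_of_ne_head {w : Fin (n + 1) → α} (ha : a ≠ w 0) :
    Fin.cons a w ∈ contiguousWords α (n + 2) (j + 1) ↔
      w ∈ contiguousWords α (n + 1) j ∧ a ∉ univ.image w := by
  simp only [mem_contiguousWords, isContiguous_cons_of_ne_head ha, image_univ_cons,
    ← mem_image_univ_iff_mem_range]
  by_cases haw : a ∈ univ.image w
  · simp only [haw, not_true, and_false, false_and]
  · simp only [haw, card_insert_of_notMem haw, Nat.succ_inj, not_false_eq_true, and_true]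

lemma card_contiguousWords_filter_head_eq :
    #{σ ∈ contiguousWords α (n + 2) j | σ 0 = σ 1} = #(contiguousWords α (n + 1) j) := by
  refine card_nbij' Fin.tail (fun w => Fin.cons (w 0) w) ?_ ?_ ?_ ?_
  · intro σ hσ
    cases σ using Fin.consCases with | _ a w
    obtain ⟨hσ, rfl : a = w 0⟩ := mem_filter.1 hσ
    exact cons_head_mem_contiguousWords.1 hσ
  · exact fun w hw => mem_filter.2 ⟨cons_head_mem_contiguousWords.2 hw, rfl⟩
  · intro σ hσ
    cases σ using Fin.consCases with | _ a w
    obtain ⟨-, rfl : a = w 0⟩ := mem_filter.1 hσ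
    rfl
  · exact fun w _ => Fin.tail_cons _ _

-- The subtraction truncates only for `j > card α`, where no word has `j` letters.
lemma card_contiguousWords_filter_head_ne :
    #{σ ∈ contiguousWords α (n + 2) (j + 1) | σ 0 ≠ σ 1} =
      #(contiguousWords α (n + 1) j) * (Fintype.card α - j) := by
  calc
    _ = #((contiguousWords α (n + 1) j).sigma fun w => (univ.image w)ᶜ) := by
      refine card_nbij' (fun σ => ⟨Fin.tail σ, σ 0⟩) (fun p => Fin.cons p.2 p.1) ?_ ?_ ?_ ?_
      · intro σ hσ
        cases σ using Fin.consCases with | _ a w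
        obtain ⟨hσ, ha : a ≠ w 0⟩ := mem_filter.1 hσ
        obtain ⟨hw, haw⟩ := (cons_mem_contiguousWords_of_ne_head ha).1 hσ
        exact mem_sigma.2 ⟨hw, mem_compl.2 haw⟩
      · rintro ⟨w, a⟩ hp
        obtain ⟨hw, haw⟩ := mem_sigma.1 hp
        have haw := mem_compl.1 haw
        have ha : a ≠ w 0 := fun ha => haw (ha ▸ mem_image_of_mem w (mem_univ 0))
        exact mem_filter.2 ⟨(cons_mem_contiguousWords_of_ne_head ha).2 ⟨hw, haw⟩, ha⟩
      · exact fun σ _ => Fin.cons_self_tail σ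
      · exact fun _ _ => rfl
    _ = #(contiguousWords α (n + 1) j) * (Fintype.card α - j) := by
      rw [card_sigma]
      refine sum_const_nat fun w hw => ?_
      rw [card_compl, (mem_contiguousWords.1 hw).2]

lemma card_contiguousWords_succ_succ :
    #(contiguousWords α (n + 2) (j + 1)) =
      #(contiguousWords α (n + 1) (j + 1)) +
        #(contiguousWords α (n + 1) j) * (Fintype.card α - j) := by
  rw [← card_contiguousWords_filter_head_eq (n := n), ← card_contiguousWords_filter_head_ne,
    card_filter_add_card_filter_not]

variable (α n j) in
theorem card_contiguousWords :
    #(contiguousWords α (n + 1) (j + 1)) = (Fintype.card α).descFactorial (j + 1) * n.choose j := by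
  induction n generalizing j with
  | zero => cases j <;> simp [contiguousWords, isContiguous_of_subsingleton]
  | succ n ih =>
    rw [card_contiguousWords_succ_succ, ih]
    cases j with
    | zero => simp [contiguousWords_succ_zero]
    | succ j =>
      rw [ih, Nat.choose_succ_succ, Nat.descFactorial_succ _ (j + 1)]
      ring

end Counting

theorem card_isContiguous [Fintype α] (n : ℕ) :
    Nat.card {σ : Fin (n + 1) → α // IsContiguous σ} =
      ∑ j ∈ range (Fintype.card α), (Fintype.card α).descFactorial (j + 1) * n.choose j := by
  classical
  have card_image_mem (σ : Fin (n + 1) → α) : #(univ.image σ) ∈ range (Fintype.card α + 1) :=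
    mem_range_succ_iff.2 (card_le_univ _)
  have filter_eq (j : ℕ) : {σ ∈ ({σ | IsContiguous σ} : Finset (Fin (n + 1) → α)) |
      #(univ.image σ) = j} = contiguousWords α (n + 1) j := by
    rw [filter_filter, contiguousWords]
  rw [Nat.card_eq_fintype_card, Fintype.card_subtype,
    card_eq_sum_card_fiberwise fun σ _ => card_image_mem σ]
  simp only [filter_eq, sum_range_succ', card_contiguousWords,
    contiguousWords_succ_zero, card_empty, add_zero]

end Contiguous

section Patterns

variable {n k : ℕ} {σ : Fin n → Fin k}

lemma wordContains_aba_iff {a b : ℕ} :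
    WordContains σ [a, b, a] ↔
      ∃ x y z, x < y ∧ y < z ∧ σ x = σ z ∧ (σ x < σ y ↔ a < b) ∧ (σ y < σ x ↔ b < a) := by
  constructor
  · rintro ⟨f : Fin 3 → Fin n, hf, hfσ⟩
    exact ⟨f 0, f 1, f 2, hf (by decide : (0 : Fin 3) < 1), hf (by decide : (1 : Fin 3) < 2),
      (hfσ 0 2).2.2 rfl, (hfσ 0 1).1, (hfσ 1 0).1⟩
  · rintro ⟨x, y, z, hxy, hyz, hxz, hlt, hgt⟩
    have heq : σ x = σ y ↔ a = b := by grind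
    refine ⟨(![x, y, z] : Fin 3 → Fin n), Fin.strictMono_iff_lt_succ.2 ?_, ?_⟩
    · intro i
      fin_cases i
      exacts [hxy, hyz]
    · change ∀ i j : Fin 3, _
      intro i j
      fin_cases i <;> fin_cases j <;> simp [← hxz, hlt, hgt, heq, eq_comm]

theorem avoids_121_212_iff_isContiguous :
    (∀ τ ∈ ({[1, 2, 1], [2, 1, 2]} : Set (List ℕ)), ¬ WordContains σ τ) ↔ IsContiguous σ := by
  simp only [Set.forall_mem_insert, Set.mem_singleton_iff, forall_eq, wordContains_aba_iff,
    isContiguous_iff_forall_lt]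
  constructor
  · rintro ⟨avoids_121, avoids_212⟩ x y z hxy hyz hxz
    by_contra hne
    rcases lt_or_gt_of_ne hne with hlt | hgt
    · exact avoids_212 ⟨x, y, z, hxy, hyz, hxz, by simp [hlt.le], by simp [hlt]⟩
    · exact avoids_121 ⟨x, y, z, hxy, hyz, hxz, by simp [hgt], by simp [hgt.le]⟩
  · intro hσ
    constructor
    · rintro ⟨x, y, z, hxy, hyz, hxz, hlt, -⟩
      exact (hlt.2 (by decide)).ne' (hσ x y z hxy hyz hxz)
    · rintro ⟨x, y, z, hxy, hyz, hxz, -, hgt⟩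
      exact (hgt.2 (by decide)).ne (hσ x y z hxy hyz hxz)

end Patterns

/-- f_{121,212}(n,k) = ∑_{j=0}^{k} j!·C(k,j)·C(n-1, j-1) for n ≥ 1,
where the j = 0 term is 0 (since C(n-1,-1) = 0). -/
theorem avoid_121_212_count (n k : ℕ) (hn : 1 ≤ n) :
    avoiders n k {[1, 2, 1], [2, 1, 2]} =
      ∑ j ∈ Finset.range (k + 1),
        if 1 ≤ j then j.factorial * k.choose j * (n - 1).choose (j - 1) else 0 := by
  obtain ⟨m, rfl⟩ := Nat.exists_eq_add_of_le' hn
  simp only [avoiders, avoids_121_212_iff_isContiguous, card_isContiguous, Fintype.card_fin]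
  rw [Finset.sum_range_succ']
  simp [Nat.descFactorial_eq_factorial_mul_choose, -Nat.descFactorial_succ]
end

section
/- Let v_{m,l} denote the pattern on the alphabet {1,2} consisting of m copies of 1, followed by one 2, followed by l copies of 1. For all integers m, l ≥ 0 with m+l ≥ 1, and all integers n ≥ 1 and k ≥ 1, f_{v_{m,l}}(n+1,k) - f_{v_{m,l}}(n,k) = ∑_{j=0}^{m+l-1} C(n,j) · f_{v_{m,l}}(n+1-j, k-1). -/
/-- The pattern v_{m,l} = 1^m 2 1^l. -/
def vPattern (m l : ℕ) : List ℕ :=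
  List.replicate m 1 ++ 2 :: List.replicate l 1

/-!
Delete the smallest letter from a word over a `(k + 1)`-letter alphabet. The word avoids `v_{m,l}`
exactly when the remaining word does and no remaining letter has `m` deleted letters before it
and `l` after it; the second condition depends only on which positions are deleted. Hence
`f(n, k + 1)` is the sum of `f(n - j, k)` over the admissible ways of marking `j` of `n` positions.
For an arbitrary weight `h(j)` these sums satisfy
`S(n + 1, h) = S(n, h(· + 1)) + ∑_{j < m + l} C(n, j) h(j)`, by an induction on `m` and `n` that
looks at whether the first position is marked and uses Pascal's rule. The recurrence is the case
`h(j) = f(n + 1 - j, k)`, for which `h(j + 1) = f(n - j, k)`.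
-/

open Finset

section WordContains

variable {n k : ℕ}

theorem map_sublist_ofFn_iff {α β : Type*} {τ : List β} {φ : β → α} {σ : Fin n → α} :
    (τ.map φ).Sublist (List.ofFn σ) ↔
      ∃ f : Fin τ.length → Fin n, StrictMono f ∧ ∀ i, σ (f i) = φ (τ.get i) := by
  rw [List.sublist_iff_exists_fin_orderEmbedding_get_eq]
  constructor
  · rintro ⟨f, hf⟩
    refine ⟨fun i => (f (i.cast (by simp))).cast (by simp), fun i j hij => ?_, fun i => ?_⟩
    · exact f.strictMono (show i.cast _ < j.cast _ from hij)
    · have := hf (i.cast (by simp))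
      simp only [List.get_eq_getElem, List.getElem_map, List.getElem_ofFn] at this
      exact this.symm
  · rintro ⟨f, hf, hσ⟩
    refine ⟨OrderEmbedding.ofStrictMono
      (fun i => (f (i.cast (by simp))).cast (by simp)) fun i j hij => ?_, fun i => ?_⟩
    · exact hf (show i.cast _ < j.cast _ from hij)
    · simp only [List.get_eq_getElem, List.getElem_map, List.getElem_ofFn]
      exact (hσ (i.cast (by simp))).symm

theorem wordContains_iff_exists_strictMonoOn {τ : List ℕ} (hτ : τ ≠ []) {σ : Fin n → Fin k} :
    WordContains σ τ ↔
      ∃ φ : ℕ → Fin k, StrictMonoOn φ {t | t ∈ τ} ∧ (τ.map φ).Sublist (List.ofFn σ) := by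
  simp only [map_sublist_ofFn_iff]
  constructor
  · rintro ⟨f, hf, hord⟩
    have hfac : (σ ∘ f).FactorsThrough τ.get := fun a b hab => (hord a b).2.2 hab
    let first : Fin τ.length := ⟨0, List.length_pos_of_ne_nil hτ⟩
    have hφ := hfac.extend_apply fun _ => σ (f first)
    refine ⟨Function.extend τ.get (σ ∘ f) fun _ => σ (f first), ?_, f, hf, fun i => (hφ i).symm⟩
    intro s hs t ht hst
    obtain ⟨a, rfl⟩ := List.mem_iff_get.1 hs
    obtain ⟨b, rfl⟩ := List.mem_iff_get.1 ht
    rw [hφ, hφ]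
    exact (hord a b).1.2 hst
  · rintro ⟨φ, hφ, f, hf, hσ⟩
    refine ⟨f, hf, fun a b => ?_⟩
    rw [hσ, hσ]
    exact ⟨hφ.lt_iff_lt (τ.get_mem a) (τ.get_mem b),
      hφ.injOn.eq_iff (τ.get_mem a) (τ.get_mem b)⟩

end WordContains

section VWord

variable {α β : Type*} {m l : ℕ}

/-- The word `a^m b a^l`, so that `vPattern m l` is `vWord m l 1 2`. -/
def vWord (m l : ℕ) (a b : α) : List α :=
  List.replicate m a ++ b :: List.replicate l a

theorem map_vWord (f : α → β) (m l : ℕ) (a b : α) :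
    (vWord m l a b).map f = vWord m l (f a) (f b) := by
  simp [vWord]

theorem vWord_succ_sublist_cons_self {a b : α} {w : List α} :
    (vWord (m + 1) l a b).Sublist (a :: w) ↔ (vWord m l a b).Sublist w := by
  simp [vWord, List.replicate_succ]

theorem vWord_succ_sublist_cons_of_ne {a b c : α} (h : a ≠ c) {w : List α} :
    (vWord (m + 1) l a b).Sublist (c :: w) ↔ (vWord (m + 1) l a b).Sublist w := by
  simp [vWord, List.replicate_succ, List.sublist_cons_iff, h]

theorem vWord_zero_sublist_cons_self [DecidableEq α] {a b : α} {w : List α} :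
    (vWord 0 l a b).Sublist (b :: w) ↔ l ≤ w.count a := by
  simp [vWord, List.replicate_sublist_iff]

theorem vWord_zero_sublist_cons_of_ne {a b c : α} (h : b ≠ c) {w : List α} :
    (vWord 0 l a b).Sublist (c :: w) ↔ (vWord 0 l a b).Sublist w := by
  simp [vWord, List.sublist_cons_iff, h]

theorem map_some_sublist_iff {u : List α} {w : List (Option α)} :
    (u.map some).Sublist w ↔ u.Sublist w.reduceOption := by
  constructor
  · intro h
    simpa [List.reduceOption] using h.filterMap id
  · intro h
    induction w generalizing u with
    | nil => simp_all
    | cons x w ih =>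
      cases x with
      | none => exact (ih h).cons _
      | some a =>
        rw [List.reduceOption_cons_of_some, List.sublist_cons_iff] at h
        obtain h | ⟨u, rfl, h⟩ := h
        · exact (ih h).cons _
        · exact (ih h).cons_cons _

theorem exists_eq_vWord_of_map_isNone {u : List (Option α)}
    (h : u.map Option.isNone = vWord m l true false) : ∃ b : α, u = vWord m l none (some b) := by
  have eq_replicate {j : ℕ} {v : List (Option α)}
      (hv : v.map Option.isNone = List.replicate j true) : v = List.replicate j none := by
    rw [List.eq_replicate_iff] at hv ⊢
    simpa using hv
  obtain ⟨u₁, u₂, rfl, h₁, h₂⟩ := List.map_eq_append_iff.1 h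
  obtain ⟨x, u₃, rfl, hx, h₃⟩ := List.map_eq_cons_iff.1 h₂
  obtain ⟨b, rfl⟩ := Option.isSome_iff_exists.1 (Option.isNone_eq_false_iff.1 hx)
  exact ⟨b, by rw [eq_replicate h₁, eq_replicate h₃, vWord]⟩

theorem vWord_sublist_map_isNone_iff {w : List (Option α)} :
    (vWord m l true false).Sublist (w.map Option.isNone) ↔
      ∃ b : α, (vWord m l none (some b)).Sublist w := by
  constructor
  · intro h
    obtain ⟨u, hu, hmap⟩ := List.sublist_map_iff.1 h
    obtain ⟨b, rfl⟩ := exists_eq_vWord_of_map_isNone hmap.symm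
    exact ⟨b, hu⟩
  · rintro ⟨b, h⟩
    simpa [map_vWord] using h.map Option.isNone

end VWord

section AvoidsV

variable {α : Type*}

/-- The word `w` over an ordered alphabet avoids `v_{m,l}`: it has no subword `a^m b a^l` with
`a < b`. For `m = l = 0` this differs from avoiding the pattern as a word in the single letter `2`,
because `a` ranges over the alphabet, not over the letters of `w`. -/
def AvoidsV [LT α] (m l : ℕ) (w : List α) : Prop :=
  ∀ a b : α, a < b → ¬ (vWord m l a b).Sublist w

theorem not_wordContains_vPattern_iff {m l n k : ℕ} (hml : 1 ≤ m + l) {σ : Fin n → Fin k} :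
    ¬ WordContains σ (vPattern m l) ↔ AvoidsV m l (List.ofFn σ) := by
  have hmem (t : ℕ) : t ∈ vPattern m l ↔ t = 1 ∨ t = 2 := by
    simp only [vPattern, List.mem_append, List.mem_cons, List.mem_replicate]
    omega
  have hmap (φ : ℕ → Fin k) : (vPattern m l).map φ = vWord m l (φ 1) (φ 2) :=
    map_vWord φ m l 1 2
  rw [wordContains_iff_exists_strictMonoOn (by simp [vPattern])]
  simp only [AvoidsV, hmap, hmem, not_exists, not_and]
  constructor
  · intro h a b hab
    have hmono : StrictMonoOn (fun t => if t = 1 then a else b) {t | t = 1 ∨ t = 2} := by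
      rintro s (rfl | rfl) t (rfl | rfl) hst <;> simp_all
    simpa using h _ hmono
  · intro h φ hφ
    exact h _ _ (hφ (.inl rfl) (.inr rfl) one_lt_two)

theorem avoidsV_fin_succ_iff {m l k : ℕ} {w : List (Fin (k + 1))} :
    AvoidsV m l w ↔ ¬ (vWord m l true false).Sublist ((w.map (finSuccEquiv k)).map Option.isNone) ∧
      AvoidsV m l (w.map (finSuccEquiv k)).reduceOption := by
  have hequiv (a b : Fin (k + 1)) : (vWord m l a b).Sublist w ↔
      (vWord m l (finSuccEquiv k a) (finSuccEquiv k b)).Sublist (w.map (finSuccEquiv k)) := by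
    refine ⟨fun h => by simpa only [map_vWord] using h.map (finSuccEquiv k), fun h => ?_⟩
    simpa [map_vWord] using h.map (finSuccEquiv k).symm
  have hsome (a b : Fin k) :
      (vWord m l (some a) (some b)).Sublist (w.map (finSuccEquiv k)) ↔
        (vWord m l a b).Sublist (w.map (finSuccEquiv k)).reduceOption := by
    rw [← map_some_sublist_iff, map_vWord]
  rw [vWord_sublist_map_isNone_iff]
  simp [AvoidsV, hequiv, Fin.forall_fin_succ, hsome]

end AvoidsV

section WordSum

variable {α β M : Type*} [Fintype α] [Fintype β] [AddCommMonoid M]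

/-- The sum of `F w` over all words `w` of length `n` over the alphabet `α`. -/
def wordSum (n : ℕ) (F : List α → M) : M :=
  ∑ σ : Fin n → α, F (List.ofFn σ)

theorem wordSum_zero (F : List α → M) : wordSum 0 F = F [] := by
  simp [wordSum]

theorem wordSum_succ (n : ℕ) (F : List α → M) :
    wordSum (n + 1) F = ∑ a, wordSum n fun w => F (a :: w) := by
  simp only [wordSum]
  rw [← (Fin.consEquiv fun _ => α).sum_comp, Fintype.sum_prod_type]
  simp [Fin.consEquiv, List.ofFn_succ]

theorem wordSum_sum {ι : Type*} (s : Finset ι) (n : ℕ) (F : ι → List α → M) :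
    (wordSum n fun w => ∑ i ∈ s, F i w) = ∑ i ∈ s, wordSum n (F i) :=
  sum_comm

theorem wordSum_const_zero (n : ℕ) : (wordSum n fun _ : List α => (0 : M)) = 0 :=
  sum_const_zero

theorem wordSum_map_equiv (e : α ≃ β) (n : ℕ) (F : List β → M) :
    (wordSum n fun w => F (w.map e)) = wordSum n F := by
  simp only [wordSum, List.map_ofFn]
  exact (Equiv.piCongrRight fun _ => e).sum_comp fun σ => F (List.ofFn σ)

theorem wordSum_option (n : ℕ) (F : List Bool → List α → M) :
    (wordSum n fun w : List (Option α) => F (w.map Option.isNone) w.reduceOption) =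
      wordSum n fun b : List Bool => wordSum (b.count false) (F b) := by
  induction n generalizing F with
  | zero => simp [wordSum_zero]
  | succ n ih =>
    rw [wordSum_succ, wordSum_succ, Fintype.sum_option, Fintype.sum_bool]
    congr 1
    · simpa using ih fun b u => F (true :: b) u
    · have hsome (a : α) := ih fun b u => F (false :: b) (a :: u)
      simp [hsome, wordSum_succ, wordSum_sum]

theorem sum_range_choose_succ_nsmul (n r : ℕ) (h : ℕ → M) :
    ∑ j ∈ range (r + 1), (n + 1).choose j • h j =
      ∑ j ∈ range r, n.choose j • h (j + 1) + ∑ j ∈ range (r + 1), n.choose j • h j := by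
  simp only [sum_range_succ', Nat.choose_succ_succ, add_nsmul, sum_add_distrib,
    Nat.choose_zero_right, add_assoc]

theorem wordSum_ite_le_count_true (n r : ℕ) (h : ℕ → M) :
    (wordSum n fun b : List Bool => if r ≤ b.count true then 0 else h (b.count true)) =
      ∑ j ∈ range r, n.choose j • h j := by
  induction n generalizing r h with
  | zero => cases r <;> simp [wordSum_zero, sum_range_succ']
  | succ n ih =>
    cases r with
    | zero => simp [wordSum_const_zero]
    | succ r =>
      rw [sum_range_choose_succ_nsmul, ← ih, ← ih, wordSum_succ, Fintype.sum_bool]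
      simp

end WordSum

section MarkedSum

variable {M : Type*} [AddCommMonoid M]

/-- The sum of `h j` over the words of length `n` in the letters `true`, `false` in which no
subword `true^m false true^l` occurs, where `j` is the number of letters `true`. The letters
`true` mark the positions of the smallest letter in a word over a larger alphabet. -/
def markedSum (m l n : ℕ) (h : ℕ → M) : M :=
  wordSum n fun b => if (vWord m l true false).Sublist b then 0 else h (b.count true)

theorem markedSum_length_zero (m l : ℕ) (h : ℕ → M) : markedSum m l 0 h = h 0 := by
  simp [markedSum, wordSum_zero, vWord]

theorem markedSum_succ_length_succ (m l n : ℕ) (h : ℕ → M) :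
    markedSum (m + 1) l (n + 1) h =
      markedSum m l n (fun j => h (j + 1)) + markedSum (m + 1) l n h := by
  simp [markedSum, wordSum_succ, vWord_succ_sublist_cons_self, vWord_succ_sublist_cons_of_ne]

theorem markedSum_zero_length_succ (l n : ℕ) (h : ℕ → M) :
    markedSum 0 l (n + 1) h =
      markedSum 0 l n (fun j => h (j + 1)) + ∑ j ∈ range l, n.choose j • h j := by
  rw [← wordSum_ite_le_count_true]
  simp [markedSum, wordSum_succ, vWord_zero_sublist_cons_self, vWord_zero_sublist_cons_of_ne]

theorem markedSum_length_succ (m l n : ℕ) (h : ℕ → M) :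
    markedSum m l (n + 1) h =
      markedSum m l n (fun j => h (j + 1)) + ∑ j ∈ range (m + l), n.choose j • h j := by
  induction m generalizing n h with
  | zero => simpa using markedSum_zero_length_succ l n h
  | succ m ihm =>
    rw [Nat.add_right_comm m 1 l]
    induction n generalizing h with
    | zero => simp [markedSum_succ_length_succ, markedSum_length_zero, sum_range_succ']
    | succ n ihn =>
      rw [markedSum_succ_length_succ, ihm, ihn, markedSum_succ_length_succ,
        sum_range_choose_succ_nsmul]
      abel

end MarkedSum

section Avoiders

variable {m l : ℕ}

open Classical in
theorem avoiders_vPattern_eq_wordSum (hml : 1 ≤ m + l) (n k : ℕ) :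
    avoiders n k {vPattern m l} =
      wordSum n fun w : List (Fin k) => if AvoidsV m l w then 1 else 0 := by
  simp only [avoiders, Set.mem_singleton_iff, forall_eq, not_wordContains_vPattern_iff hml]
  rw [Nat.card_eq_fintype_card, Fintype.card_subtype, card_filter, wordSum]

theorem avoiders_vPattern_succ_eq_markedSum (hml : 1 ≤ m + l) (n k : ℕ) :
    avoiders n (k + 1) {vPattern m l} =
      markedSum m l n fun j => avoiders (n - j) k {vPattern m l} := by
  classical
  have count_false (σ : Fin n → Bool) :
      n - (List.ofFn σ).count true = (List.ofFn σ).count false := by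
    rw [Nat.sub_eq_iff_eq_add' (List.count_le_length.trans_eq List.length_ofFn),
      List.count_true_add_count_false, List.length_ofFn]
  calc
    _ = wordSum n fun w : List (Option (Fin k)) =>
          if ¬ (vWord m l true false).Sublist (w.map Option.isNone) ∧
            AvoidsV m l w.reduceOption then 1 else 0 := by
      simp only [avoiders_vPattern_eq_wordSum hml, avoidsV_fin_succ_iff]
      rw [← wordSum_map_equiv (finSuccEquiv k)]
    _ = wordSum n fun b => wordSum (b.count false) fun w : List (Fin k) =>
          if ¬ (vWord m l true false).Sublist b ∧ AvoidsV m l w then 1 else 0 :=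
      wordSum_option n fun b w =>
        if ¬ (vWord m l true false).Sublist b ∧ AvoidsV m l w then 1 else 0
    _ = _ := by
      refine sum_congr rfl fun σ _ => ?_
      simp only [count_false, avoiders_vPattern_eq_wordSum hml]
      split_ifs with hσ <;> simp [hσ, wordSum_const_zero]

end Avoiders

/-- f_{v_{m,l}}(n+1,k) - f_{v_{m,l}}(n,k) = ∑_{j=0}^{m+l-1} C(n,j)·f_{v_{m,l}}(n+1-j,k-1)
for m + l ≥ 1, n ≥ 1, k ≥ 1. -/
theorem avoid_vml_recurrence (m l n k : ℕ) (hml : 1 ≤ m + l) (hn : 1 ≤ n) (hk : 1 ≤ k) :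
    (avoiders (n + 1) k {vPattern m l} : ℤ) - (avoiders n k {vPattern m l} : ℤ) =
      ((∑ j ∈ Finset.range (m + l),
        n.choose j * avoiders (n + 1 - j) (k - 1) {vPattern m l} : ℕ) : ℤ) := by
  obtain ⟨k, rfl⟩ := Nat.exists_eq_add_of_le' hk
  rw [avoiders_vPattern_succ_eq_markedSum hml, avoiders_vPattern_succ_eq_markedSum hml,
    markedSum_length_succ]
  simp only [Nat.add_sub_add_right, Nat.add_sub_cancel, smul_eq_mul]
  push_cast
  ring
end
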